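/- Every 3-vector of the rank-10 𝒪-lattice Λ = Λ′ ⊥ Λ″ ⊥ H_𝒪 is perpendicular to some primitive isotropic vector of Λ, and the group U(Λ) acts transitively on the set of pairs (r, n) where r is a 3-vector, n is a primitive isotropic vector, and ψ(r, n) = 0. In particular, U(Λ) acts transitively on the set of 3-vectors of Λ. -/

import Mathlib

open Polynomial

noncomputable section

/-- The Eisenstein ring `𝒪 = ℤ[ω]`, where `ω = e^{2πi/6}` is a primitive sixth root of
unity (so `ω² - ω + 1 = 0`), presented as `ℤ[X]/(X² - X + 1)`. -/
abbrev O : Type := AdjoinRoot (X ^ 2 - X + 1 : ℤ[X])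

/-- `ω`, the distinguished primitive sixth root of unity in `𝒪`. -/
def ω : O := AdjoinRoot.root _

lemma ω_sq : ω ^ 2 - ω + 1 = 0 := by
  have h := AdjoinRoot.eval₂_root (X ^ 2 - X + 1 : ℤ[X])
  simpa [ω, eval₂_add, eval₂_sub, eval₂_pow, eval₂_X, eval₂_one] using h

/-- Complex conjugation on the Eisenstein ring: the ring involution with
`conj ω = 1 - ω = ω⁻¹`. -/
def conj : O →+* O :=
  AdjoinRoot.lift (algebraMap ℤ O) (1 - ω) (by
    have h := ω_sq
    simp only [eval₂_add, eval₂_sub, eval₂_pow, eval₂_X, eval₂_one]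
    ring_nf
    ring_nf at h
    linear_combination h)

/-- `θ := ω - ω⁻¹ = ω - conj ω = 2ω - 1`, a square root of `-3` in `𝒪`. -/
def θ : O := ω - conj ω

/-- The rank-10 𝒪-lattice `Λ = Λ′ ⊥ Λ″ ⊥ H_𝒪`, modelled on `Fin 10 → 𝒪`.  The basis is
`(r₁′, …, r₄′, r₁″, …, r₄″, e, f)` (coordinates `0–3`, `4–7`, `8`, `9`).  This is the Gram
matrix: on each copy of `Λ⁴` (coordinates `0–3` and `4–7`) we have `ψ(rᵢ,rᵢ) = 3`,
`ψ(rᵢ,rᵢ₊₁) = θ`, `ψ(rᵢ,rⱼ) = 0` for `j > i+1`; the two copies and `H_𝒪` are mutually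
orthogonal; and on `H_𝒪` we have `ψ(e,e) = ψ(f,f) = 0`, `ψ(e,f) = θ`, `ψ(f,e) = −θ`. -/
def gram10 : Fin 10 → Fin 10 → O := fun i j =>
  if (i : ℕ) < 8 ∧ (j : ℕ) < 8 then
    (if (i : ℕ) / 4 = (j : ℕ) / 4 then
      (if i = j then 3
       else if (i : ℕ) + 1 = (j : ℕ) then θ
       else if (j : ℕ) + 1 = (i : ℕ) then conj θ
       else 0)
     else 0)
  else if (i : ℕ) = 8 ∧ (j : ℕ) = 9 then θ
  else if (i : ℕ) = 9 ∧ (j : ℕ) = 8 then -θ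
  else 0

/-- The Hermitian form of `Λ`: 𝒪-linear in the first variable, conjugate-linear in the
second; it has hyperbolic signature `(9,1)`. -/
def psi10 (x y : Fin 10 → O) : O :=
  ∑ i : Fin 10, ∑ j : Fin 10, x i * conj (y j) * gram10 i j

/-- `g` belongs to the unitary group `U(Λ)`. -/
def IsUnitary10 (g : (Fin 10 → O) ≃ₗ[O] (Fin 10 → O)) : Prop :=
  ∀ x y, psi10 (g x) (g y) = psi10 x y

/-- The `i`-th basis vector of `Λ` (so `b 0, …, b 3` are `r₁′, …, r₄′`;
`b 4, …, b 7` are `r₁″, …, r₄″`; `b 8 = e` and `b 9 = f`). -/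
def b (i : Fin 10) : Fin 10 → O := Pi.single i 1

/-- `x ∈ Λ` is primitive: `x ∉ λΛ` for every non-unit `λ ∈ 𝒪`. -/
def IsPrimVec (x : Fin 10 → O) : Prop :=
  ∀ a : O, (∃ y : Fin 10 → O, x = a • y) → IsUnit a

/-!
Dividing `ψ` by `θ` gives a skew-Hermitian form on `M ⊥ H` with `M = Λ′ ⊥ Λ″` and `H` the
hyperbolic plane. In the orbit of an isotropic vector or of a 3-vector choose `v = (k, a, c)` with
`norm c` minimal. The Eichler transformations that fix `e` move `k` by any vector of `c M` and then
change the trace of `a * conj c` by any multiple of `2 * norm c`, while the imaginary part of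
`a * conj c` is determined by `k`; the swap `(a, c) ↦ (-c, a)` of `H` shows `norm c ≤ norm a`. As a
`ℤ`-lattice each `Λ⁴` is `E₈`, whose covering radius makes `norm a < norm c` achievable unless both
components of `k / c` are deep holes; these are halves of lattice vectors, and one more translation,
by a root of `M`, handles them. Hence `c = 0`: the orbit of a primitive isotropic vector contains
`e`, and the orbit of a 3-vector meets the orthogonal complement of `e`.

The stabilizer of `e` carries every 3-vector orthogonal to `e` into `M`, and `U(M)` is transitive on
the 3-vectors of `M` because reflections in two of them whose product under `θ⁻¹ ψ` is a unit
satisfy the braid relation.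
-/

lemma conj_ω : conj ω = 1 - ω := by simp [conj, ω]

lemma θ_eq : θ = 2 * ω - 1 := by rw [θ, conj_ω]; ring

lemma θ_mul_θ : θ * θ = -3 := by rw [θ_eq]; linear_combination 4 * ω_sq

lemma conj_θ : conj θ = -θ := by
  rw [θ_eq, map_sub, map_mul, conj_ω, map_ofNat, map_one]; ring

@[simp] lemma conj_conj (z : O) : conj (conj z) = z := by
  suffices conj.comp conj = RingHom.id O from DFunLike.congr_fun this z
  refine AdjoinRoot.ringHom_ext (RingHom.ext_int _ _) ?_
  change conj (conj ω) = ω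
  simp only [conj_ω, map_sub, map_one, sub_sub_cancel]

namespace O

/-- The basis `1, ω` identifies `𝒪` with Mathlib's quadratic algebra `ℤ[ω]`, `ω² = -1 + ω`. -/
def equivQuadraticAlgebra : O ≃ₐ[ℤ] QuadraticAlgebra ℤ (-1) 1 :=
  AlgEquiv.ofAlgHom
    (AdjoinRoot.liftAlgHom _ (Algebra.ofId ℤ _) QuadraticAlgebra.omega (by
      simp [eval₂_add, eval₂_sub, pow_two, QuadraticAlgebra.omega_mul_omega_eq_add]))
    (QuadraticAlgebra.lift ⟨ω, by
      rw [neg_smul, one_smul, one_smul]; linear_combination ω_sq⟩)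
    (by ext <;> simp [ω])
    (by ext; simp [ω])

/-- The coordinate `x` of `x + y ω`. -/
def re : O →+ ℤ where
  toFun z := (equivQuadraticAlgebra z).re
  map_zero' := by simp
  map_add' := by simp

/-- The coordinate `y` of `x + y ω`. -/
def im : O →+ ℤ where
  toFun z := (equivQuadraticAlgebra z).im
  map_zero' := by simp
  map_add' := by simp

/-- The norm `z * conj z`, as an integer. -/
def norm : O →*₀ ℤ where
  toFun z := (equivQuadraticAlgebra z).norm
  map_zero' := by simp
  map_one' := by simp
  map_mul' := by simp

@[ext high] lemma ext {z w : O} (hre : re z = re w) (him : im z = im w) : z = w :=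
  equivQuadraticAlgebra.injective (QuadraticAlgebra.ext hre him)

@[simp] lemma re_one : re 1 = 1 := by
  simpa [re] using QuadraticAlgebra.re_one

@[simp] lemma im_one : im 1 = 0 := by
  simpa [im] using QuadraticAlgebra.im_one

@[simp] lemma re_intCast (n : ℤ) : re n = n := by simp [re]

@[simp] lemma im_intCast (n : ℤ) : im n = 0 := by simp [im]

@[simp] lemma re_natCast (n : ℕ) : re n = n := mod_cast re_intCast n

@[simp] lemma im_natCast (n : ℕ) : im n = 0 := mod_cast im_intCast n

@[simp] lemma re_ofNat (n : ℕ) [n.AtLeastTwo] : re ofNat(n) = ofNat(n) := re_natCast n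

@[simp] lemma im_ofNat (n : ℕ) [n.AtLeastTwo] : im ofNat(n) = 0 := im_natCast n

@[simp] lemma re_ω : re ω = 0 := by simp [re, equivQuadraticAlgebra, ω]

@[simp] lemma im_ω : im ω = 1 := by simp [im, equivQuadraticAlgebra, ω]

@[simp] lemma re_mul (z w : O) : re (z * w) = re z * re w - im z * im w := by
  simp only [re, im, AddMonoidHom.coe_mk, ZeroHom.coe_mk, map_mul, QuadraticAlgebra.re_mul]; ring

@[simp] lemma im_mul (z w : O) :
    im (z * w) = re z * im w + im z * re w + im z * im w := by
  simp [re, im]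

lemma eq_re_add_im_mul_ω (z : O) : z = re z + im z * ω := by
  ext <;> simp

@[simp] lemma re_conj (z : O) : re (conj z) = re z + im z := by
  conv_lhs => rw [eq_re_add_im_mul_ω z]
  simp [conj_ω]

@[simp] lemma im_conj (z : O) : im (conj z) = -im z := by
  conv_lhs => rw [eq_re_add_im_mul_ω z]
  simp [conj_ω]

@[simp] lemma re_θ : re θ = -1 := by simp [θ]

@[simp] lemma im_θ : im θ = 2 := by simp [θ]

lemma norm_eq (z : O) : norm z = re z ^ 2 + re z * im z + im z ^ 2 := by
  change (equivQuadraticAlgebra z).norm = _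
  simp only [QuadraticAlgebra.norm_def, re, im, AddMonoidHom.coe_mk, ZeroHom.coe_mk]; ring

lemma mul_conj_self (z : O) : z * conj z = norm z := by
  ext <;> simp only [re_mul, im_mul, re_conj, im_conj, re_intCast, im_intCast, norm_eq] <;> ring

lemma norm_nonneg (z : O) : 0 ≤ norm z := by
  rw [norm_eq]; nlinarith [sq_nonneg (re z), sq_nonneg (im z), sq_nonneg (re z + im z)]

@[simp] lemma norm_eq_zero {z : O} : norm z = 0 ↔ z = 0 := by
  refine ⟨fun h => ?_, fun h => by rw [h, map_zero]⟩
  rw [norm_eq] at h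
  ext <;> rw [map_zero] <;>
    nlinarith [sq_nonneg (re z), sq_nonneg (im z), sq_nonneg (re z + im z)]

lemma norm_pos {z : O} : 0 < norm z ↔ z ≠ 0 := by
  rw [(norm_nonneg z).lt_iff_ne', Ne, norm_eq_zero]

@[simp] lemma norm_conj (z : O) : norm (conj z) = norm z := by
  simp only [norm_eq, re_conj, im_conj]; ring

@[simp] lemma norm_neg (z : O) : norm (-z) = norm z := by
  simp [norm_eq]

@[simp] lemma norm_ω : norm ω = 1 := by simp [norm_eq]

@[simp] lemma norm_θ : norm θ = 3 := by simp [norm_eq]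

instance : CharZero O :=
  ⟨fun m n h => by simpa using congrArg re h⟩

instance : NoZeroDivisors O :=
  ⟨fun {z w} h => by simpa using congrArg norm h⟩

instance : Nontrivial O := ⟨0, 1, fun h => by simpa using congrArg re h⟩

instance : IsDomain O := NoZeroDivisors.to_isDomain O

lemma isUnit_iff_norm_eq_one {z : O} : IsUnit z ↔ norm z = 1 := by
  refine ⟨fun h => ?_, fun h => .of_mul_eq_one (conj z) (by rw [mul_conj_self, h, Int.cast_one])⟩
  exact (Int.isUnit_iff.1 (h.map norm)).resolve_right fun h' => by linarith [norm_nonneg z]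

end O

section SesquilinearForm

variable {R M N : Type*} [CommRing R] {σ : R →+* R} [AddCommGroup M] [Module R M]
  [AddCommGroup N] [Module R N]

/-- A sesquilinear form `B` is skew-Hermitian if `B y x = -σ (B x y)`. All Hermitian forms below
are `θ`-multiples of such forms. -/
def IsSkewHermitian (B : M →ₗ[R] M →ₛₗ[σ] R) : Prop :=
  ∀ x y, B y x = -σ (B x y)

/-- The group of linear automorphisms preserving a sesquilinear form. -/
def isometryGroup (B : M →ₗ[R] M →ₛₗ[σ] R) : Subgroup (M ≃ₗ[R] M) where
  carrier := {g | ∀ x y, B (g x) (g y) = B x y}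
  one_mem' _ _ := rfl
  mul_mem' hg hh x y := (hg _ _).trans (hh x y)
  inv_mem' {g} hg x y := by
    rw [← hg]
    exact congr_arg₂ (fun x y => B x y) (g.apply_symm_apply x) (g.apply_symm_apply y)

/-- The orthogonal direct sum of two sesquilinear forms. -/
def orthogonalSum (B : M →ₗ[R] M →ₛₗ[σ] R) (C : N →ₗ[R] N →ₛₗ[σ] R) :
    (M × N) →ₗ[R] (M × N) →ₛₗ[σ] R :=
  LinearMap.mk₂'ₛₗ _ _ (fun x y => B x.1 y.1 + C x.2 y.2)
    (fun x y z => by simp only [Prod.fst_add, Prod.snd_add, map_add, LinearMap.add_apply]; ring)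
    (fun c x y => by simp [mul_add])
    (fun x y z => by simp only [Prod.fst_add, Prod.snd_add, map_add]; ring)
    (fun c x y => by simp [mul_add])

@[simp] lemma orthogonalSum_apply (B : M →ₗ[R] M →ₛₗ[σ] R) (C : N →ₗ[R] N →ₛₗ[σ] R)
    (x y : M × N) : orthogonalSum B C x y = B x.1 y.1 + C x.2 y.2 := rfl

variable (σ) in
/-- The skew-Hermitian hyperbolic plane. -/
def hyperbolicPlane : (R × R) →ₗ[R] (R × R) →ₛₗ[σ] R :=
  LinearMap.mk₂'ₛₗ _ _ (fun x y => x.1 * σ y.2 - x.2 * σ y.1)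
    (fun x y z => by simp only [Prod.fst_add, Prod.snd_add]; ring)
    (fun c x y => by
      simp only [Prod.smul_fst, Prod.smul_snd, smul_eq_mul, RingHom.id_apply]; ring)
    (fun x y z => by simp only [Prod.fst_add, Prod.snd_add, map_add]; ring)
    (fun c x y => by simp only [Prod.smul_fst, Prod.smul_snd, smul_eq_mul, map_mul]; ring)

@[simp] lemma hyperbolicPlane_apply (x y : R × R) :
    hyperbolicPlane σ x y = x.1 * σ y.2 - x.2 * σ y.1 := rfl

/-- The orthogonal direct sum of a sesquilinear form and the hyperbolic plane. -/
abbrev hyperbolicExtension (B : M →ₗ[R] M →ₛₗ[σ] R) : (M × R × R) →ₗ[R] (M × R × R) →ₛₗ[σ] R :=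
  orthogonalSum B (hyperbolicPlane σ)

lemma hyperbolicExtension_apply_zero_one_zero (B : M →ₗ[R] M →ₛₗ[σ] R) (v : M × R × R) :
    hyperbolicExtension B v (0, 1, 0) = -v.2.2 := by
  simp only [orthogonalSum_apply, hyperbolicPlane_apply, map_zero, map_one, mul_zero, mul_one,
    zero_sub, zero_add]

lemma IsSkewHermitian.orthogonalSum {B : M →ₗ[R] M →ₛₗ[σ] R} {C : N →ₗ[R] N →ₛₗ[σ] R}
    (hB : IsSkewHermitian B) (hC : IsSkewHermitian C) :
    IsSkewHermitian (orthogonalSum B C) := fun x y => by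
  simp only [orthogonalSum_apply, hB x.1 y.1, hC x.2 y.2, map_add, neg_add]

lemma isSkewHermitian_hyperbolicPlane (hσ : Function.Involutive σ) :
    IsSkewHermitian (hyperbolicPlane σ) := fun x y => by
  simp only [hyperbolicPlane_apply, map_sub, map_mul, hσ _]; ring

lemma prodCongr_mem_isometryGroup {B : M →ₗ[R] M →ₛₗ[σ] R} {C : N →ₗ[R] N →ₛₗ[σ] R}
    {g : M ≃ₗ[R] M} {h : N ≃ₗ[R] N} (hg : g ∈ isometryGroup B) (hh : h ∈ isometryGroup C) :
    g.prodCongr h ∈ isometryGroup (orthogonalSum B C) :=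
  fun x y => congr_arg₂ (· + ·) (hg x.1 y.1) (hh x.2 y.2)

lemma prodComm_mem_isometryGroup (B : M →ₗ[R] M →ₛₗ[σ] R) :
    LinearEquiv.prodComm R M M ∈ isometryGroup (orthogonalSum B B) :=
  fun _ _ => add_comm _ _

lemma smulOfUnit_mem_isometryGroup (B : M →ₗ[R] M →ₛₗ[σ] R) {u : Rˣ} (hu : (u : R) * σ u = 1) :
    LinearEquiv.smulOfUnit u ∈ isometryGroup B := fun x y => by
  change B ((u : R) • x) ((u : R) • y) = _
  rw [map_smulₛₗ, map_smul, LinearMap.smul_apply, smul_smul, mul_comm, hu, one_smul]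

/-- The isometry `(a, c) ↦ (-c, a)` of the hyperbolic plane. -/
def hyperbolicSwap : (R × R) ≃ₗ[R] (R × R) :=
  (LinearEquiv.prodComm R R R).trans ((LinearEquiv.neg R).prodCongr (.refl R R))

lemma hyperbolicSwap_mem_isometryGroup :
    hyperbolicSwap ∈ isometryGroup (hyperbolicPlane σ) := fun x y => by
  simp only [hyperbolicSwap, LinearEquiv.trans_apply, LinearEquiv.prodComm_apply,
    LinearEquiv.prodCongr_apply, LinearEquiv.neg_apply, LinearEquiv.refl_apply, Prod.fst_swap,
    Prod.snd_swap, hyperbolicPlane_apply, map_neg]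
  ring

/-- A coefficient `a` satisfying `ha` makes `v ↦ v + a B(v, r) r` an isometry; its inverse has
coefficient `-σ a`. -/
lemma exists_quasiReflection {B : M →ₗ[R] M →ₛₗ[σ] R} (hB : IsSkewHermitian B) {r : M} {a : R}
    (ha : σ a - a + a * σ a * B r r = 0) :
    ∃ g ∈ isometryGroup B, ∀ v, g v = v + (a * B v r) • r := by
  have hunit : IsUnit (1 + (a • B.flip r) r) := by
    refine .of_mul_eq_one (1 - σ a * B r r) ?_
    simp only [LinearMap.smul_apply, LinearMap.flip_apply, smul_eq_mul]
    linear_combination -B r r * ha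
  refine ⟨LinearEquiv.dilatransvection hunit, fun x y => ?_, fun v => rfl⟩
  change B (x + (a * B x r) • r) (y + (a * B y r) • r) = B x y
  simp only [map_add, map_smul, map_smulₛₗ, LinearMap.add_apply, LinearMap.smul_apply, smul_eq_mul,
    map_mul, hB y r]
  linear_combination B x r * σ (B y r) * ha

/-- The Eichler transformation attached to `x ∈ M` and `z ∈ R`. It fixes the first basis vector of
the hyperbolic plane. -/
def eichlerMap (B : M →ₗ[R] M →ₛₗ[σ] R) (x : M) (z : R) : (M × R × R) →ₗ[R] (M × R × R) where
  toFun v := (v.1 - v.2.2 • x, v.2.1 + B v.1 x + z * v.2.2, v.2.2)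
  map_add' v w := by
    ext <;> simp only [Prod.fst_add, Prod.snd_add, map_add, LinearMap.add_apply, add_smul] <;>
      first | ring1 | abel
  map_smul' c v := by
    ext <;> simp only [Prod.smul_fst, Prod.smul_snd, map_smul, LinearMap.smul_apply, smul_eq_mul,
      smul_sub, mul_smul, RingHom.id_apply]
    ring

lemma eichlerMap_comp_eichlerMap (B : M →ₗ[R] M →ₛₗ[σ] R) (x : M) (z : R) :
    eichlerMap B (-x) (-z - B x x) ∘ₗ eichlerMap B x z = LinearMap.id := by
  refine LinearMap.ext fun v => ?_
  ext <;> simp only [eichlerMap, LinearMap.coe_comp, LinearMap.coe_mk, AddHom.coe_mk,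
    Function.comp_apply, LinearMap.id_apply, smul_neg, sub_neg_eq_add, sub_add_cancel, map_neg,
    map_sub, map_smul, LinearMap.sub_apply, LinearMap.smul_apply, smul_eq_mul]
  ring

/-- The Eichler transformation as an automorphism. -/
def eichler (B : M →ₗ[R] M →ₛₗ[σ] R) (x : M) (z : R) : (M × R × R) ≃ₗ[R] (M × R × R) :=
  .ofLinearMap (eichlerMap B x z) (eichlerMap B (-x) (-z - B x x))
    (by simpa using eichlerMap_comp_eichlerMap B (-x) (-z - B x x))
    (eichlerMap_comp_eichlerMap B x z)

lemma eichler_apply (B : M →ₗ[R] M →ₛₗ[σ] R) (x : M) (z : R) (v : M × R × R) :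
    eichler B x z v = (v.1 - v.2.2 • x, v.2.1 + B v.1 x + z * v.2.2, v.2.2) := rfl

lemma eichler_mem_isometryGroup {B : M →ₗ[R] M →ₛₗ[σ] R} (hB : IsSkewHermitian B) {x : M} {z : R}
    (hz : B x x = σ z - z) :
    eichler B x z ∈ isometryGroup (hyperbolicExtension B) := fun v w => by
  simp only [hyperbolicExtension, eichler_apply, orthogonalSum_apply, hyperbolicPlane_apply,
    map_sub, map_add, map_mul, map_smul, map_smulₛₗ, LinearMap.sub_apply, LinearMap.smul_apply,
    smul_eq_mul]
  linear_combination v.2.2 * σ w.2.2 * hz - v.2.2 * hB w.1 x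

end SesquilinearForm

section Primitive

variable (R : Type*) {M N : Type*} [CommRing R] [AddCommGroup M] [Module R M]
  [AddCommGroup N] [Module R N]

/-- A vector is primitive if it is divisible by units only. -/
def IsPrimitive (v : M) : Prop :=
  ∀ a : R, (∃ w, v = a • w) → IsUnit a

variable {R}

lemma isPrimitive_map_iff (f : M ≃ₗ[R] N) {v : M} :
    IsPrimitive R (f v) ↔ IsPrimitive R v := by
  refine forall_congr' fun a => imp_congr_left ?_
  simp only [f.surjective.exists, ← map_smul, f.injective.eq_iff]

lemma isPrimitive_zero_one_zero : IsPrimitive R ((0, 1, 0) : M × R × R) := by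
  rintro a ⟨w, hw⟩
  exact .of_mul_eq_one w.2.1 (congrArg (fun v => v.2.1) hw).symm

end Primitive

section ReducedNorm

variable {M N : Type*} [AddCommGroup M] [Module O M] [AddCommGroup N] [Module O N]

/-- The integer `n` with `B v v = -n θ`; the associated Hermitian form `θ B` then has
`ψ(v, v) = 3 n`. -/
def reducedNorm (B : M →ₗ[O] M →ₛₗ[conj] O) (v : M) : ℤ := O.re (B v v)

variable {B : M →ₗ[O] M →ₛₗ[conj] O} {C : N →ₗ[O] N →ₛₗ[conj] O}

lemma IsSkewHermitian.apply_self (hB : IsSkewHermitian B) (v : M) :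
    B v v = -reducedNorm B v * θ := by
  have him : O.im (B v v) = -2 * O.re (B v v) := by
    have := congrArg O.re (hB v v)
    simp only [map_neg, O.re_conj] at this
    linarith
  ext <;> simp only [him, reducedNorm, neg_mul, map_neg, O.re_mul, O.im_mul, O.re_intCast,
    O.im_intCast, O.re_θ, O.im_θ] <;> ring

lemma IsSkewHermitian.θ_mul_apply_self (hB : IsSkewHermitian B) (v : M) :
    θ * B v v = 3 * reducedNorm B v := by
  rw [hB.apply_self]; linear_combination -(reducedNorm B v : O) * θ_mul_θ

lemma reducedNorm_smul (c : O) (v : M) :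
    reducedNorm B (c • v) = O.norm c * reducedNorm B v := by
  have : B (c • v) (c • v) = O.norm c * B v v := by
    rw [map_smulₛₗ, map_smul, LinearMap.smul_apply, ← O.mul_conj_self, smul_eq_mul, smul_eq_mul]
    ring
  rw [reducedNorm, this, O.re_mul, O.re_intCast, O.im_intCast, zero_mul, sub_zero, reducedNorm]

lemma IsSkewHermitian.reducedNorm_add (hB : IsSkewHermitian B) (v w : M) :
    reducedNorm B (v + w) = reducedNorm B v + reducedNorm B w - O.im (B v w) := by
  simp only [reducedNorm, hB v w, map_add, LinearMap.add_apply, map_neg, O.re_conj]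
  ring

lemma reducedNorm_orthogonalSum (v : M × N) :
    reducedNorm (orthogonalSum B C) v = reducedNorm B v.1 + reducedNorm C v.2 := by
  simp [reducedNorm]

lemma reducedNorm_hyperbolicPlane (h : O × O) :
    reducedNorm (hyperbolicPlane conj) h = -O.im (h.1 * conj h.2) := by
  simp only [reducedNorm, hyperbolicPlane_apply, map_sub, O.re_mul, O.im_mul, O.re_conj, O.im_conj]
  ring

lemma reducedNorm_of_mem_isometryGroup {g : M ≃ₗ[O] M} (hg : g ∈ isometryGroup B) (v : M) :
    reducedNorm B (g v) = reducedNorm B v :=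
  congrArg O.re (hg v v)

lemma IsSkewHermitian.exists_rootReflection (hB : IsSkewHermitian B) {r : M}
    (hr : reducedNorm B r = 1) :
    ∃ g ∈ isometryGroup B, ∀ v, g v = v + (-ω * B v r) • r := by
  refine exists_quasiReflection hB ?_
  rw [hB.apply_self, hr, map_neg, conj_ω, θ_eq, Int.cast_one]
  linear_combination (2 * ω - 1) * ω_sq

lemma exists_smul_mem_isometryGroup (B : M →ₗ[O] M →ₛₗ[conj] O) {u : O}
    (hu : O.norm u = 1) : ∃ g ∈ isometryGroup B, ∀ v, g v = u • v := by
  have huu : u * conj u = 1 := by rw [O.mul_conj_self, hu, Int.cast_one]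
  exact ⟨.smulOfUnit (.mkOfMulEqOne u _ huu), smulOfUnit_mem_isometryGroup B huu, fun _ => rfl⟩

/-- By the braid relation, the product of the reflections in `r` and `s` carries `r` to a unit
multiple of `s`. -/
lemma IsSkewHermitian.exists_map_eq_of_norm_apply_eq_one (hB : IsSkewHermitian B) {r s : M}
    (hr : reducedNorm B r = 1) (hs : reducedNorm B s = 1) (hrs : O.norm (B r s) = 1) :
    ∃ g ∈ isometryGroup B, g r = s := by
  obtain ⟨f, hf, f_apply⟩ := hB.exists_rootReflection hs
  obtain ⟨g, hg, g_apply⟩ := hB.exists_rootReflection hr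
  obtain ⟨k, hk, k_apply⟩ :=
    exists_smul_mem_isometryGroup B (u := conj (-ω * B r s)) (by simp [hrs])
  have hfr : B (f r) r = 1 - ω := by
    have hconj := O.mul_conj_self (B r s)
    rw [f_apply, map_add, map_smul, LinearMap.add_apply, LinearMap.smul_apply, hB.apply_self, hr,
      hB r s, θ_eq, smul_eq_mul]
    rw [hrs] at hconj
    push_cast at hconj ⊢
    linear_combination ω * hconj
  have hgfr : g (f r) = (-ω * B r s) • s := by
    rw [g_apply, hfr, f_apply, show -ω * (1 - ω) = -1 by linear_combination ω_sq]
    module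
  refine ⟨k * g * f, mul_mem (mul_mem hk hg) hf, ?_⟩
  change k (g (f r)) = s
  rw [hgfr, k_apply, smul_smul, mul_comm, O.mul_conj_self]
  simp [hrs]

end ReducedNorm

section E8

variable {K : Type*} [Field K] [LinearOrder K] [IsStrictOrderedRing K]

/-- The `E₈` lattice scaled by `2`, so that its coordinates are integers: all coordinates have the
same parity and their sum is divisible by `4`. -/
def doubledE8 : AddSubgroup (Fin 8 → ℤ) where
  carrier := {w | (∀ i j, 2 ∣ w i - w j) ∧ 4 ∣ ∑ i, w i}
  zero_mem' := by simp
  add_mem' {v w} hv hw := by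
    refine ⟨fun i j => ?_, ?_⟩
    · simpa only [Pi.add_apply, add_sub_add_comm] using dvd_add (hv.1 i j) (hw.1 i j)
    · simpa only [Pi.add_apply, Finset.sum_add_distrib] using dvd_add hv.2 hw.2
  neg_mem' {v} hv := by
    refine ⟨fun i j => ?_, ?_⟩
    · simpa only [Pi.neg_apply, neg_sub_neg] using hv.1 j i
    · simpa only [Pi.neg_apply, Finset.sum_neg_distrib, dvd_neg] using hv.2

/-- The points that have no vector of `doubledE8` closer to them than `0`. -/
def doubledE8VoronoiCell (K : Type*) [Field K] [LinearOrder K] : Set (Fin 8 → K) :=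
  {u | ∀ w ∈ doubledE8, ∑ i, u i ^ 2 ≤ ∑ i, (u i - w i) ^ 2}

lemma two_smul_mem_doubledE8 {v : Fin 8 → ℤ} (hv : 2 ∣ ∑ i, v i) : 2 • v ∈ doubledE8 := by
  refine ⟨fun i j => ⟨v i - v j, by simp [mul_sub]⟩, ?_⟩
  simpa [← Finset.mul_sum] using mul_dvd_mul_left 2 hv

lemma exists_sign_mul_eq_abs (x : K) : ∃ ε : ℤ, (ε = 1 ∨ ε = -1) ∧ x * ε = |x| := by
  rcases le_total 0 x with hx | hx
  · exact ⟨1, .inl rfl, by simp [abs_of_nonneg hx]⟩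
  · exact ⟨-1, .inr rfl, by simp [abs_of_nonpos hx]⟩

lemma two_mul_sum_mul_le_of_mem_voronoiCell {u : Fin 8 → K} (hu : u ∈ doubledE8VoronoiCell K)
    {w : Fin 8 → ℤ} (hw : w ∈ doubledE8) : 2 * ∑ i, u i * w i ≤ ((∑ i, w i ^ 2 : ℤ) : K) := by
  have h := hu w hw
  have hexpand : ∑ i, (u i - w i) ^ 2 = ∑ i, u i ^ 2 - 2 * ∑ i, u i * w i + ∑ i, (w i : K) ^ 2 := by
    rw [Finset.mul_sum, ← Finset.sum_sub_distrib, ← Finset.sum_add_distrib]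
    exact Finset.sum_congr rfl fun i _ => by ring
  push_cast
  linarith

lemma sum_mul_le_four_of_mem_voronoiCell {u : Fin 8 → K} (hu : u ∈ doubledE8VoronoiCell K)
    {ε : Fin 8 → ℤ} (hε : ∀ i, ε i = 1 ∨ ε i = -1) (hsum : 4 ∣ ∑ i, ε i) :
    ∑ i, u i * ε i ≤ 4 := by
  have hmem : ε ∈ doubledE8 :=
    ⟨fun i j => by rcases hε i with hi | hi <;> rcases hε j with hj | hj <;> norm_num [hi, hj],
      hsum⟩
  have hsq : ∑ i, ε i ^ 2 = 8 := by simp [fun i => sq_eq_one_iff.2 (hε i)]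
  have := two_mul_sum_mul_le_of_mem_voronoiCell hu hmem
  rw [hsq] at this
  push_cast at this
  linarith

lemma abs_add_abs_le_two_of_mem_voronoiCell {u : Fin 8 → K} (hu : u ∈ doubledE8VoronoiCell K)
    {i j : Fin 8} (hij : i ≠ j) : |u i| + |u j| ≤ 2 := by
  obtain ⟨ε, hε, hεabs⟩ := exists_sign_mul_eq_abs (u i)
  obtain ⟨δ, hδ, hδabs⟩ := exists_sign_mul_eq_abs (u j)
  let v : Fin 8 → ℤ := Pi.single i ε + Pi.single j δ
  have hsum : ∑ k, v k = ε + δ := by simp [v, Finset.sum_add_distrib]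
  have hsq : ∑ k, v k ^ 2 = ε ^ 2 + δ ^ 2 := by
    have (k : Fin 8) : v k ^ 2 = (Pi.single i (ε ^ 2) + Pi.single j (δ ^ 2) : Fin 8 → ℤ) k := by
      simp only [v, Pi.add_apply, Pi.single_apply]
      split_ifs <;> simp_all
    simp [this, Finset.sum_add_distrib]
  have hinner : ∑ k, u k * v k = |u i| + |u j| := by
    simp [v, ← hεabs, ← hδabs, mul_add, Finset.sum_add_distrib, Pi.single_apply]
  have hmem : 2 • v ∈ doubledE8 := two_smul_mem_doubledE8 (by
    rw [hsum]; rcases hε with rfl | rfl <;> rcases hδ with rfl | rfl <;> norm_num)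
  have h := two_mul_sum_mul_le_of_mem_voronoiCell hu hmem
  have hnorm : ∑ k, (2 • v) k ^ 2 = 8 := by
    simp [mul_pow, ← Finset.mul_sum, hsq, sq_eq_one_iff.2 hε, sq_eq_one_iff.2 hδ]
  rw [hnorm] at h
  simp only [Pi.smul_apply, nsmul_eq_mul] at h
  push_cast at h
  simp only [mul_left_comm _ (2 : K), ← Finset.mul_sum, hinner] at h
  linarith

lemma two_dvd_sum_of_sign {ε : Fin 8 → ℤ} (hε : ∀ i, ε i = 1 ∨ ε i = -1) : 2 ∣ ∑ i, ε i := by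
  have h : 2 ∣ ∑ i, (ε i - 1) :=
    Finset.dvd_sum fun i _ => by rcases hε i with hi | hi <;> norm_num [hi]
  rw [show ∑ i, (ε i - 1) = ∑ i, ε i - 8 by simp] at h
  omega

lemma sum_abs_le_of_mem_voronoiCell {u : Fin 8 → K} (hu : u ∈ doubledE8VoronoiCell K)
    (k : Fin 8) : ∑ i, |u i| ≤ 4 + 2 * |u k| := by
  choose ε hε hεabs using fun i => exists_sign_mul_eq_abs (u i)
  by_cases hsum : 4 ∣ ∑ i, ε i
  · have := sum_mul_le_four_of_mem_voronoiCell hu hε hsum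
    simp only [hεabs] at this
    linarith [abs_nonneg (u k)]
  · let δ : Fin 8 → ℤ := ε - Pi.single k (2 * ε k)
    have hδ (i : Fin 8) : δ i = 1 ∨ δ i = -1 := by
      by_cases hik : i = k
      · subst hik
        have := hε i
        simp only [δ, Pi.sub_apply, Pi.single_eq_same]
        omega
      · simpa [δ, hik] using hε i
    have hδsum : ∑ i, δ i = ∑ i, ε i - 2 * ε k := by simp [δ]
    have hδmul : ∑ i, u i * δ i = ∑ i, |u i| - 2 * |u k| := by
      simp only [δ, Pi.sub_apply, Pi.single_apply, Int.cast_sub, Int.cast_ite, Int.cast_mul,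
        Int.cast_ofNat, Int.cast_zero, mul_sub, mul_ite, mul_zero, Finset.sum_sub_distrib,
        Finset.sum_ite_eq', Finset.mem_univ, if_true, ← hεabs]
      ring
    have := sum_mul_le_four_of_mem_voronoiCell hu hδ (by
      have := two_dvd_sum_of_sign hε
      have := hε k
      omega)
    linarith

/-- If `s ≤ a i ≤ M` for `i ≠ j`, this bounds `∑ i, a i ^ 2` by a function of `a j` and `∑ i, a i`.
The bound `M` is `a j` if `a j < 1` and `2 - a j` otherwise. -/
lemma sum_sq_eq_sub_sum_erase (a : Fin 8 → K) (s M : K) (j : Fin 8) :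
    ∑ i, a i ^ 2 = (M + s) * ∑ i, a i - 8 * M * s + (a j - s) * (a j - M) -
      ∑ i ∈ Finset.univ.erase j, (a i - s) * (M - a i) := by
  have h := Finset.add_sum_erase Finset.univ (fun i => (a i - s) * (M - a i)) (Finset.mem_univ j)
  have hexpand : ∑ i, (a i - s) * (M - a i) = (M + s) * ∑ i, a i - 8 * M * s - ∑ i, a i ^ 2 := by
    simp only [Fin.sum_univ_eight]; ring
  linear_combination h + hexpand

lemma sum_sq_lt_four_of_lt_one {a : Fin 8 → K} {j k : Fin 8} (hk0 : 0 ≤ a k)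
    (hmin : ∀ i, a k ≤ a i) (hmax : ∀ i, a i ≤ a j) (hsum : ∑ i, a i ≤ 4 + 2 * a k)
    (hj : a j < 1) : ∑ i, a i ^ 2 < 4 := by
  rw [sum_sq_eq_sub_sum_erase a (a k) (a j) j]
  have hD : 0 ≤ ∑ i ∈ Finset.univ.erase j, (a i - a k) * (a j - a i) :=
    Finset.sum_nonneg fun i _ => mul_nonneg (sub_nonneg.2 (hmin i)) (sub_nonneg.2 (hmax i))
  have hkj := hmin j
  have hS := mul_le_mul_of_nonneg_left hsum (show 0 ≤ a j + a k by linarith)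
  have hpos : 0 < (1 - a j) * (1 - a k) := mul_pos (by linarith) (by linarith)
  nlinarith [mul_nonneg hk0 (sub_nonneg.2 hkj)]

lemma sum_sq_eq_four_sub (a : Fin 8 → K) (s : K) (j : Fin 8) :
    ∑ i, a i ^ 2 = 4 - 2 * ((2 - a j - s) * (a j - 1 + s)) -
      (2 - a j + s) * (4 + 2 * s - ∑ i, a i) -
        ∑ i ∈ Finset.univ.erase j, (a i - s) * (2 - a j - a i) := by
  rw [sum_sq_eq_sub_sum_erase a s (2 - a j) j]
  ring

lemma exists_two_mul_eq_intCast_of_forall_ne_eq {a : Fin 8 → K} {j : Fin 8} {s : K}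
    (ha : ∀ i ≠ j, a i = s) (hj : a j = 2 - s) (hs : s = 0 ∨ 4 + 2 * s - ∑ i, a i = 0) :
    ∃ n : Fin 8 → ℤ, (∀ i, 2 * a i = n i) ∧
      ((∀ i, 2 ∣ n i) ∧ 4 ∣ ∑ i, n i ∨ (∀ i, ¬ 2 ∣ n i) ∧ ∑ i, n i = 10) := by
  have ha' (i : Fin 8) : a i = s + (Pi.single j (2 - 2 * s) : Fin 8 → K) i := by
    rcases eq_or_ne i j with rfl | hij
    · rw [hj, Pi.single_eq_same]; ring
    · rw [ha i hij, Pi.single_eq_of_ne hij, add_zero]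
  rcases hs with rfl | hs
  · refine ⟨Pi.single j 4, fun i => ?_, .inl ⟨fun i => ?_, by simp⟩⟩
    · rw [ha']; simp only [Pi.single_apply]; split_ifs <;> norm_num
    · simp only [Pi.single_apply]; split_ifs <;> norm_num
  · have hhalf : s = 1 / 2 := by
      simp only [ha', Finset.sum_add_distrib, Finset.sum_const, Finset.card_univ,
        Fintype.card_fin, Finset.sum_pi_single', Finset.mem_univ, if_true, nsmul_eq_mul] at hs
      push_cast at hs
      linarith
    refine ⟨1 + Pi.single j 2, fun i => ?_, .inr ⟨fun i => ?_, by simp [Finset.sum_add_distrib]⟩⟩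
    · rw [ha', hhalf]; simp only [Pi.add_apply, Pi.single_apply]; split_ifs <;> norm_num
    · simp only [Pi.add_apply, Pi.single_apply]; split_ifs <;> norm_num

lemma exists_two_mul_eq_intCast_of_zero_or_one {a : Fin 8 → K} (ha : ∀ i, a i = 0 ∨ a i = 1)
    (hsum : ∑ i, a i = 4) :
    ∃ n : Fin 8 → ℤ, (∀ i, 2 * a i = n i) ∧ (∀ i, 2 ∣ n i) ∧ 4 ∣ ∑ i, n i := by
  choose n hn using fun i => show ∃ n : ℤ, a i = n from
    (ha i).elim (fun h => ⟨0, by simp [h]⟩) (fun h => ⟨1, by simp [h]⟩)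
  have hnsum : ∑ i, n i = 4 := by
    simp only [hn] at hsum
    exact_mod_cast hsum
  refine ⟨2 • n, fun i => by simp [hn], fun i => by simp, ?_⟩
  simp [← Finset.mul_sum, hnsum]

lemma sum_sq_lt_four_or_exists_bounds {a : Fin 8 → K} (h0 : ∀ i, 0 ≤ a i)
    (hpair : ∀ i j, i ≠ j → a i + a j ≤ 2) (hsum : ∀ k, ∑ i, a i ≤ 4 + 2 * a k) :
    ∑ i, a i ^ 2 < 4 ∨ ∃ j s, 0 ≤ s ∧ 1 ≤ a j ∧
    s ≤ 2 - a j ∧ 0 ≤ 4 + 2 * s - ∑ i, a i ∧ ∀ i ≠ j, s ≤ a i ∧ a i ≤ 2 - a j := by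
  obtain ⟨j, hmax⟩ := Finite.exists_max a
  obtain ⟨k, hmin⟩ := Finite.exists_min a
  rcases lt_or_ge (a j) 1 with hj | hj
  · exact .inl (sum_sq_lt_four_of_lt_one (h0 k) hmin hmax (hsum k) hj)
  · obtain ⟨i, hij⟩ := exists_ne j
    have hkj : a k ≤ 2 - a j := by linarith [hmin i, hpair i j hij]
    exact .inr ⟨j, a k, h0 k, hj, hkj, sub_nonneg.2 (hsum k), fun i hij =>
      ⟨hmin i, by linarith [hpair i j hij]⟩⟩

/-- The three shapes of an extremal `a`, up to permutation, are `(2, 0⁷)`, `(3/2, (1/2)⁷)` and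
`(1⁴, 0⁴)`. -/
lemma sum_sq_lt_four_or_exists_two_mul_eq_intCast {a : Fin 8 → K} (h0 : ∀ i, 0 ≤ a i)
    (hpair : ∀ i j, i ≠ j → a i + a j ≤ 2) (hsum : ∀ k, ∑ i, a i ≤ 4 + 2 * a k) :
    ∑ i, a i ^ 2 < 4 ∨
    ∑ i, a i ^ 2 = 4 ∧ ∃ n : Fin 8 → ℤ, (∀ i, 2 * a i = n i) ∧
      ((∀ i, 2 ∣ n i) ∧ 4 ∣ ∑ i, n i ∨ (∀ i, ¬ 2 ∣ n i) ∧ ∑ i, n i = 10) := by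
  obtain hlt | ⟨j, s, hs, hj, hsj, hS, hi⟩ := sum_sq_lt_four_or_exists_bounds h0 hpair hsum
  · exact .inl hlt
  have h₁ : 0 ≤ (2 - a j - s) * (a j - 1 + s) := mul_nonneg (by linarith) (by linarith)
  have h₂ : 0 ≤ (2 - a j + s) * (4 + 2 * s - ∑ i, a i) := mul_nonneg (by linarith) hS
  have h₃ : ∀ i ∈ Finset.univ.erase j, 0 ≤ (a i - s) * (2 - a j - a i) := fun i hmem => by
    have := hi i (Finset.ne_of_mem_erase hmem)
    exact mul_nonneg (by linarith) (by linarith)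
  have key := sum_sq_eq_four_sub a s j
  refine (lt_or_eq_of_le (by linarith [Finset.sum_nonneg h₃])).imp_right fun hsq => ⟨hsq, ?_⟩
  have h₁' : (2 - a j - s) * (a j - 1 + s) = 0 := by linarith [Finset.sum_nonneg h₃]
  have h₂' : (2 - a j + s) * (4 + 2 * s - ∑ i, a i) = 0 := by linarith [Finset.sum_nonneg h₃]
  have h₃' := (Finset.sum_eq_zero_iff_of_nonneg h₃).1 (by linarith)
  rcases mul_eq_zero.1 h₁' with h | h
  · refine exists_two_mul_eq_intCast_of_forall_ne_eq (j := j) (s := s)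
      (fun i hij => by linarith [hi i hij]) (by linarith) ?_
    exact (mul_eq_zero.1 h₂').imp_left fun h' => by linarith
  · obtain ⟨hs', hj'⟩ : s = 0 ∧ a j = 1 := ⟨by linarith, by linarith⟩
    have ha (i : Fin 8) : a i = 0 ∨ a i = 1 := by
      rcases eq_or_ne i j with rfl | hij
      · exact .inr hj'
      · refine (mul_eq_zero.1 (h₃' i (Finset.mem_erase_of_ne_of_mem hij (Finset.mem_univ i)))).imp
          (fun h' => by linarith) (fun h' => by linarith)
    have hS' : ∑ i, a i = 4 := by rw [hs', hj'] at h₂'; linarith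
    obtain ⟨n, hn, hn'⟩ := exists_two_mul_eq_intCast_of_zero_or_one ha hS'
    exact ⟨n, hn, .inl hn'⟩

lemma sign_mul_mem_doubledE8_of_even {ε n : Fin 8 → ℤ} (hε : ∀ i, ε i = 1 ∨ ε i = -1)
    (hn : ∀ i, 2 ∣ n i) (hsum : 4 ∣ ∑ i, n i) : ε * n ∈ doubledE8 := by
  refine ⟨fun i j => ?_, ?_⟩
  · exact dvd_sub ((hn i).mul_left _) ((hn j).mul_left _)
  · have h : 4 ∣ ∑ i, ((ε * n) i - n i) := Finset.dvd_sum fun i _ => by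
      have := hn i
      rcases hε i with hi | hi <;> simp only [Pi.mul_apply, hi] <;> omega
    rw [Finset.sum_sub_distrib] at h
    exact (dvd_iff_dvd_of_dvd_sub h).2 hsum

lemma sign_mul_mem_doubledE8_of_odd {ε n : Fin 8 → ℤ} (hε : ∀ i, ε i = 1 ∨ ε i = -1)
    (hεsum : ¬ 4 ∣ ∑ i, ε i) (hn : ∀ i, ¬ 2 ∣ n i) (hsum : ∑ i, n i = 10) :
    ε * n ∈ doubledE8 := by
  have hmod (i : Fin 8) : 4 ∣ (ε * n) i - (ε i + n i - 1) := by
    have := hn i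
    rcases hε i with hi | hi <;> simp only [Pi.mul_apply, hi] <;> omega
  refine ⟨fun i j => ?_, ?_⟩
  · have := hmod i
    have := hmod j
    have := hn i
    have := hn j
    have := hε i
    have := hε j
    omega
  · have h : 4 ∣ ∑ i, ((ε * n) i - (ε i + n i - 1)) := Finset.dvd_sum fun i _ => hmod i
    have h2 := two_dvd_sum_of_sign hε
    rw [Finset.sum_sub_distrib, show ∑ i, (ε i + n i - 1) = ∑ i, ε i + ∑ i, n i - 8 by
      simp [Finset.sum_add_distrib]] at h
    omega

/-- The covering radius of `doubledE8` is `2`, and its deep holes are halves of lattice vectors. -/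
lemma sum_sq_lt_four_or_two_mul_mem_doubledE8 {u : Fin 8 → K} (hu : u ∈ doubledE8VoronoiCell K) :
    ∑ i, u i ^ 2 < 4 ∨ ∑ i, u i ^ 2 = 4 ∧ ∃ l ∈ doubledE8, ∀ i, 2 * u i = l i := by
  choose ε hε hεabs using fun i => exists_sign_mul_eq_abs (u i)
  obtain hlt | ⟨hsq, n, hn, hshape⟩ := sum_sq_lt_four_or_exists_two_mul_eq_intCast
    (fun i => abs_nonneg (u i)) (fun _ _ => abs_add_abs_le_two_of_mem_voronoiCell hu)
    (sum_abs_le_of_mem_voronoiCell hu)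
  · exact .inl (by simpa only [sq_abs] using hlt)
  refine .inr ⟨by simpa only [sq_abs] using hsq, ε * n, ?_, fun i => ?_⟩
  · rcases hshape with ⟨hn2, hsum⟩ | ⟨hn2, hsum⟩
    · exact sign_mul_mem_doubledE8_of_even hε hn2 hsum
    · refine sign_mul_mem_doubledE8_of_odd hε (fun hεsum => ?_) hn2 hsum
      have habs := sum_mul_le_four_of_mem_voronoiCell hu hε hεsum
      have hsum' : 2 * ∑ i, |u i| = 10 := by
        simp only [Finset.mul_sum, hn]; exact_mod_cast hsum
      simp only [hεabs] at habs
      linarith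
  · have hε2 : (ε i : K) * ε i = 1 := by rcases hε i with hi | hi <;> simp [hi]
    rw [Pi.mul_apply, Int.cast_mul, ← hn, ← hεabs]
    linear_combination -(2 * u i) * hε2

end E8

namespace O

lemma two_dvd_of_two_dvd_norm {z : O} (h : 2 ∣ norm z) : 2 ∣ z := by
  have hparity : Even (re z ^ 2 + re z * im z + im z ^ 2) := by rwa [even_iff_two_dvd, ← norm_eq]
  obtain ⟨⟨k, hk⟩, ⟨l, hl⟩⟩ : Even (re z) ∧ Even (im z) := by
    simp only [Int.even_add, Int.even_mul, Int.even_pow] at hparity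
    tauto
  exact ⟨k + l * ω, by ext <;> simp [hk, hl, two_mul]⟩

lemma θ_dvd_of_three_dvd_norm {z : O} (h : 3 ∣ norm z) : θ ∣ z := by
  have hsq : 3 ∣ (re z - im z) ^ 2 := by
    have : (re z - im z) ^ 2 = norm z - 3 * (re z * im z) := by rw [norm_eq]; ring
    rw [this]
    exact dvd_sub h (dvd_mul_right _ _)
  obtain ⟨k, hk⟩ := Int.prime_three.dvd_of_dvd_pow hsq
  refine ⟨(k + im z : ℤ) + (-im z - 2 * k : ℤ) * ω, ?_⟩
  ext <;> simp only [re_mul, im_mul, map_add, re_intCast, im_intCast, re_ω, im_ω, re_θ, im_θ] <;>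
    linarith

lemma norm_two : norm 2 = 4 := by simp [norm_eq]

lemma norm_emod_three_ne_two (z : O) : norm z % 3 ≠ 2 := by
  have hmod : norm z = (re z - im z) ^ 2 + 3 * (re z * im z) := by rw [norm_eq]; ring
  rw [hmod, Int.add_mul_emod_self_left, pow_two, Int.mul_emod]
  have : (re z - im z) % 3 = 0 ∨ (re z - im z) % 3 = 1 ∨ (re z - im z) % 3 = 2 := by omega
  rcases this with h | h | h <;> rw [h] <;> decide

lemma norm_eq_of_le_six {z : O} (hz : norm z ≤ 6) :
    norm z = 0 ∨ norm z = 1 ∨ norm z = 3 ∨ norm z = 4 := by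
  have h0 := norm_nonneg z
  have h3 := norm_emod_three_ne_two z
  have h4 : 2 ∣ norm z → 4 ∣ norm z := fun h => by
    obtain ⟨w, rfl⟩ := two_dvd_of_two_dvd_norm h
    rw [map_mul, norm_two]
    exact dvd_mul_right _ _
  omega

end O

lemma exists_perm_of_sum_eq_six {f : Fin 4 → ℤ} (hf : ∀ i, f i = 0 ∨ f i = 1 ∨ f i = 4)
    (hsum : ∑ i, f i = 6) :
    ∃ σ : Equiv.Perm (Fin 4), f (σ 0) = 0 ∧ f (σ 1) = 1 ∧ f (σ 2) = 1 ∧ f (σ 3) = 4 := by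
  refine ⟨Tuple.sort f, ?_⟩
  have hmono := Tuple.monotone_sort f
  have h01 := hmono (show (0 : Fin 4) ≤ 1 by decide)
  have h12 := hmono (show (1 : Fin 4) ≤ 2 by decide)
  have h23 := hmono (show (2 : Fin 4) ≤ 3 by decide)
  rw [← Equiv.sum_comp (Tuple.sort f), Fin.sum_univ_four] at hsum
  have h0 := hf (Tuple.sort f 0)
  have h1 := hf (Tuple.sort f 1)
  have h2 := hf (Tuple.sort f 2)
  have h3 := hf (Tuple.sort f 3)
  simp only [Function.comp_apply] at h01 h12 h23
  omega

section RankFour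

/-- The form `θ⁻¹ ψ` on `Λ⁴`, in the basis `r₁, …, r₄`. Over `ℤ`, its reduced norm is that of the
`E₈` lattice. -/
def e8Form : (Fin 4 → O) →ₗ[O] (Fin 4 → O) →ₛₗ[conj] O :=
  Matrix.toLinearMapₛₗ₂' O (RingHom.id O) conj
    !![-θ, 1, 0, 0; -1, -θ, 1, 0; 0, -1, -θ, 1; 0, 0, -1, -θ]

/-- The coordinates in which `θ * e8Form` is the standard Hermitian form of `𝒪⁴`. The image of
`Λ⁴` is the preimage of the tetracode under reduction modulo `θ`. -/
def tetracodeCoord : (Fin 4 → O) →ₗ[O] (Fin 4 → O) :=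
  Matrix.toLin' !![θ, 1, 0, 0; 0, 1, -θ, -1; 0, 1, 0, 1; 0, 0, 0, 1]

lemma tetracodeCoord_apply (y : Fin 4 → O) :
    tetracodeCoord y = ![θ * y 0 + y 1, y 1 - θ * y 2 - y 3, y 1 + y 3, y 3] := by
  ext i : 1
  fin_cases i <;> simp only [tetracodeCoord, Fin.zero_eta, Fin.mk_one, Fin.reduceFinMk,
    Matrix.toLin'_apply, Matrix.mulVec, dotProduct, Matrix.of_apply, Matrix.cons_val,
    Fin.sum_univ_four] <;> ring

lemma e8Form_apply (x y : Fin 4 → O) :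
    e8Form x y = -θ * (x 0 * conj (y 0) + x 1 * conj (y 1) + x 2 * conj (y 2) + x 3 * conj (y 3)) +
      (x 0 * conj (y 1) + x 1 * conj (y 2) + x 2 * conj (y 3)) -
        (x 1 * conj (y 0) + x 2 * conj (y 1) + x 3 * conj (y 2)) := by
  simp only [e8Form, Matrix.toLinearMapₛₗ₂'_apply, Fin.sum_univ_four, RingHom.id_apply,
    smul_eq_mul, Matrix.of_apply, Matrix.cons_val]
  ring

lemma isSkewHermitian_e8Form : IsSkewHermitian e8Form := fun x y => by
  simp only [e8Form_apply, map_add, map_sub, map_mul, map_neg, conj_θ, conj_conj]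
  ring

lemma θ_mul_e8Form (x y : Fin 4 → O) :
    θ * e8Form x y = ∑ i, tetracodeCoord x i * conj (tetracodeCoord y i) := by
  simp only [e8Form_apply, tetracodeCoord_apply, Fin.sum_univ_four, Matrix.cons_val, map_add,
    map_sub, map_mul, conj_θ]
  linear_combination -(x 1 * conj (y 1) + x 3 * conj (y 3)) * θ_mul_θ

lemma three_mul_reducedNorm_e8Form (x : Fin 4 → O) :
    3 * reducedNorm e8Form x = ∑ i, O.norm (tetracodeCoord x i) := by
  have h := isSkewHermitian_e8Form.θ_mul_apply_self x
  simp only [θ_mul_e8Form, O.mul_conj_self] at h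
  exact_mod_cast h.symm

lemma reducedNorm_e8Form_nonneg (x : Fin 4 → O) : 0 ≤ reducedNorm e8Form x := by
  have := three_mul_reducedNorm_e8Form x
  have := Finset.sum_nonneg fun i (_ : i ∈ Finset.univ) => O.norm_nonneg (tetracodeCoord x i)
  omega

lemma tetracodeCoord_injective : Function.Injective tetracodeCoord := by
  refine (injective_iff_map_eq_zero _).2 fun x hx => ?_
  have hθ : θ ≠ 0 := by simp [← O.norm_pos]
  simp only [tetracodeCoord_apply, Matrix.cons_eq_zero_iff] at hx
  obtain ⟨h0, h1, h2, h3, -⟩ := hx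
  rw [h3] at h1 h2
  rw [add_zero] at h2
  rw [h2] at h0 h1
  ext1 i
  fin_cases i <;> simp_all

lemma reducedNorm_e8Form_eq_zero {x : Fin 4 → O} : reducedNorm e8Form x = 0 ↔ x = 0 := by
  refine ⟨fun h => ?_, fun h => by simp [h, reducedNorm]⟩
  have hsum := three_mul_reducedNorm_e8Form x
  rw [h, mul_zero, eq_comm, Finset.sum_eq_zero_iff_of_nonneg fun i _ => O.norm_nonneg _] at hsum
  refine tetracodeCoord_injective ?_
  ext1 i
  simpa using hsum i (Finset.mem_univ i)

lemma exists_tetracodeCoord_eq_θ_smul (v : Fin 4 → O) : ∃ x, tetracodeCoord x = θ • v := by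
  refine ⟨![v 0 - v 2 + v 3, θ * (v 2 - v 3), v 2 - 2 * v 3 - v 1, θ * v 3], ?_⟩
  rw [tetracodeCoord_apply]
  ext1 i
  fin_cases i <;> simp only [Fin.zero_eta, Fin.mk_one, Fin.reduceFinMk, Matrix.cons_val,
    Pi.smul_apply, smul_eq_mul] <;> ring

lemma exists_root_of_norm_tetracodeCoord_eq_three {z : Fin 4 → O} {i : Fin 4}
    (hi : O.norm (tetracodeCoord z i) = 3) :
    ∃ x, reducedNorm e8Form x = 1 ∧ θ * e8Form z x = 3 := by
  obtain ⟨u, hu⟩ := O.θ_dvd_of_three_dvd_norm hi.symm.dvd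
  have hu1 : O.norm u = 1 := by
    rw [hu, map_mul, O.norm_θ] at hi
    omega
  obtain ⟨x, hx⟩ := exists_tetracodeCoord_eq_θ_smul (Pi.single i u)
  refine ⟨x, ?_, ?_⟩
  · have h3 := three_mul_reducedNorm_e8Form x
    rw [hx, Finset.sum_eq_single i (fun j _ hj => by simp [hj]) (by simp)] at h3
    simp only [Pi.smul_apply, Pi.single_eq_same, smul_eq_mul, map_mul, O.norm_θ, hu1] at h3
    omega
  · rw [θ_mul_e8Form, hx, Finset.sum_eq_single i (fun j _ hj => by simp [hj]) (by simp), hu]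
    have := O.mul_conj_self u
    rw [hu1, Int.cast_one] at this
    simp only [Pi.smul_apply, Pi.single_eq_same, smul_eq_mul, map_mul, conj_θ]
    linear_combination -θ ^ 2 * this - θ_mul_θ

lemma exists_root_of_norm_tetracodeCoord {z : Fin 4 → O} {σ : Equiv.Perm (Fin 4)}
    (h0 : O.norm (tetracodeCoord z (σ 0)) = 0) (h1 : O.norm (tetracodeCoord z (σ 1)) = 1)
    (h2 : O.norm (tetracodeCoord z (σ 2)) = 1) (h3 : O.norm (tetracodeCoord z (σ 3)) = 4) :
    ∃ x, reducedNorm e8Form x = 1 ∧ θ * e8Form z x = 3 := by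
  obtain ⟨u, hu⟩ := O.two_dvd_of_two_dvd_norm (z := tetracodeCoord z (σ 3)) (by omega)
  set v := tetracodeCoord z (σ 1) with hv
  set w := tetracodeCoord z (σ 2) with hw
  have hu1 : O.norm u = 1 := by
    rw [hu, map_mul, O.norm_two] at h3
    omega
  -- The coordinates of the root `y - z`, congruent to those of `-z` modulo `θ`, are to be units
  -- where `z` has a nonzero coordinate, chosen so that `θ * e8Form z (y - z)` is `3`.
  obtain ⟨y, hy⟩ := exists_tetracodeCoord_eq_θ_smul
    (![0, (1 - ω) * v, -ω * w, -θ * u] ∘ σ.symm)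
  have hx (k : Fin 4) : tetracodeCoord (y - z) (σ k) = ![0, ω * v, (1 - ω) * w, u] k := by
    rw [map_sub, hy, Pi.sub_apply, Pi.smul_apply, Function.comp_apply, σ.symm_apply_apply]
    fin_cases k
    · simpa using h0
    · change θ * ((1 - ω) * v) - v = ω * v
      rw [θ_eq]; linear_combination -2 * v * ω_sq
    · change θ * (-ω * w) - w = (1 - ω) * w
      rw [θ_eq]; linear_combination -2 * w * ω_sq
    · change θ * (-θ * u) - tetracodeCoord z (σ 3) = u
      rw [hu]; linear_combination -u * θ_mul_θ
  refine ⟨y - z, ?_, ?_⟩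
  · have h3 := three_mul_reducedNorm_e8Form (y - z)
    rw [← Equiv.sum_comp σ, Fin.sum_univ_four] at h3
    simp only [hx, Matrix.cons_val, ← conj_ω, map_mul, O.norm_conj, O.norm_ω, h1, h2, hu1,
      map_zero] at h3
    omega
  · rw [θ_mul_e8Form, ← Equiv.sum_comp σ, Fin.sum_univ_four]
    simp only [hx, Matrix.cons_val, ← hv, ← hw, hu, map_mul, map_sub, map_one, map_zero, conj_ω]
    have huu := O.mul_conj_self u
    have hvv := O.mul_conj_self v
    have hww := O.mul_conj_self w
    rw [hu1] at huu
    rw [h1] at hvv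
    rw [h2] at hww
    push_cast at huu hvv hww
    linear_combination 2 * huu + (1 - ω) * hvv + ω * hww

lemma exists_root_of_reducedNorm_eq_two {z : Fin 4 → O} (hz : reducedNorm e8Form z = 2) :
    ∃ x, reducedNorm e8Form x = 1 ∧ θ * e8Form z x = 3 := by
  by_cases h3 : ∃ i, O.norm (tetracodeCoord z i) = 3
  · exact exists_root_of_norm_tetracodeCoord_eq_three h3.choose_spec
  have hsum : ∑ i, O.norm (tetracodeCoord z i) = 6 := by
    rw [← three_mul_reducedNorm_e8Form, hz]
    norm_num
  have hnorm (i : Fin 4) : O.norm (tetracodeCoord z i) = 0 ∨ O.norm (tetracodeCoord z i) = 1 ∨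
      O.norm (tetracodeCoord z i) = 4 := by
    have hle : O.norm (tetracodeCoord z i) ≤ 6 := hsum ▸
      Finset.single_le_sum (fun j _ => O.norm_nonneg (tetracodeCoord z j)) (Finset.mem_univ i)
    have := O.norm_eq_of_le_six hle
    have := not_exists.1 h3 i
    omega
  obtain ⟨σ, h0, h1, h2, h3⟩ := exists_perm_of_sum_eq_six hnorm hsum
  exact exists_root_of_norm_tetracodeCoord h0 h1 h2 h3

/-- Integral coordinates identifying `Λ⁴` with the `E₈` lattice. -/
def e8Coord : (Fin 4 → O) →+ (Fin 8 → ℤ) :=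
  AddMonoidHom.mk' (fun y => ![
    O.re (y 1) + 2 * O.re (y 2) + 2 * O.im (y 2) + 2 * O.im (y 3),
    -O.re (y 1),
    -O.re (y 1) - 2 * O.im (y 2) + 2 * O.re (y 3) + 2 * O.im (y 3),
    O.re (y 1) + 2 * O.re (y 3),
    2 * O.re (y 0) + O.re (y 1) + 2 * O.im (y 1),
    2 * O.im (y 0) - O.re (y 1),
    2 * O.re (y 0) + 2 * O.im (y 0) - O.re (y 1),
    O.re (y 1) + 2 * O.im (y 1) - 2 * O.re (y 2)]) fun x y => by
      ext i
      fin_cases i <;> simp only [Fin.zero_eta, Fin.mk_one, Fin.reduceFinMk, Pi.add_apply, map_add,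
        Matrix.cons_val] <;> ring

lemma e8Coord_apply (y : Fin 4 → O) : e8Coord y = ![
    O.re (y 1) + 2 * O.re (y 2) + 2 * O.im (y 2) + 2 * O.im (y 3),
    -O.re (y 1),
    -O.re (y 1) - 2 * O.im (y 2) + 2 * O.re (y 3) + 2 * O.im (y 3),
    O.re (y 1) + 2 * O.re (y 3),
    2 * O.re (y 0) + O.re (y 1) + 2 * O.im (y 1),
    2 * O.im (y 0) - O.re (y 1),
    2 * O.re (y 0) + 2 * O.im (y 0) - O.re (y 1),
    O.re (y 1) + 2 * O.im (y 1) - 2 * O.re (y 2)] := rfl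

lemma sum_e8Coord_sq (y : Fin 4 → O) : ∑ i, e8Coord y i ^ 2 = 8 * reducedNorm e8Form y := by
  have h := three_mul_reducedNorm_e8Form y
  simp only [tetracodeCoord_apply, Fin.sum_univ_four, Matrix.cons_val, O.norm_eq, map_add, map_sub,
    O.re_mul, O.im_mul, O.re_θ, O.im_θ] at h
  simp only [e8Coord_apply, Fin.sum_univ_eight, Matrix.cons_val]
  linarith

lemma exists_e8Coord_eq {w : Fin 8 → ℤ} (hw : w ∈ doubledE8) : ∃ y, e8Coord y = w := by
  obtain ⟨h2, q, hq⟩ := hw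
  choose d hd using fun i => h2 i 0
  rw [Fin.sum_univ_eight] at hq
  refine ⟨![(d 6 - d 5 : ℤ) + (d 5 - d 1 : ℤ) * ω,
    (-w 0 - 2 * d 1 : ℤ) + (w 0 + d 1 + d 4 + d 5 - d 6 : ℤ) * ω,
    (4 * w 0 + d 1 + d 2 + d 3 + 2 * d 4 + 2 * d 5 - 2 * q : ℤ) +
      (-w 0 + d 1 - d 2 - d 4 - d 5 + q : ℤ) * ω,
    (w 0 + d 1 + d 3 : ℤ) + (-2 * w 0 - d 1 - d 3 - d 4 - d 5 + q : ℤ) * ω], ?_⟩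
  have := hd 1
  have := hd 2
  have := hd 3
  have := hd 4
  have := hd 5
  have := hd 6
  rw [e8Coord_apply]
  ext i
  fin_cases i <;> simp only [Fin.zero_eta, Fin.mk_one, Fin.reduceFinMk, Matrix.cons_val, map_add,
    O.re_mul, O.im_mul, O.re_intCast, O.im_intCast, O.re_ω, O.im_ω] <;> linarith

lemma sum_e8Coord_div_sub_sq {c : O} (hc : c ≠ 0) (x y : Fin 4 → O) :
    ∑ i, ((e8Coord (conj c • y) i : ℚ) / O.norm c - e8Coord x i) ^ 2 =
      8 * reducedNorm e8Form (y - c • x) / O.norm c := by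
  have hm : (O.norm c : ℚ) ≠ 0 := by simpa using hc
  have hcoord (i : Fin 8) : (e8Coord (conj c • y) i : ℚ) / O.norm c - e8Coord x i =
      (e8Coord (conj c • (y - c • x)) i : ℚ) / O.norm c := by
    rw [smul_sub, smul_smul, mul_comm (conj c) c, O.mul_conj_self, Int.cast_smul_eq_zsmul, map_sub,
      map_zsmul, Pi.sub_apply, Pi.smul_apply, smul_eq_mul]
    push_cast
    field_simp
  have hsum := sum_e8Coord_sq (conj c • (y - c • x))
  rw [reducedNorm_smul, O.norm_conj] at hsum
  have hsum' : ∑ i, (e8Coord (conj c • (y - c • x)) i : ℚ) ^ 2 =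
      8 * (O.norm c * reducedNorm e8Form (y - c • x)) := by exact_mod_cast hsum
  simp only [hcoord, div_pow, ← Finset.sum_div, hsum']
  field_simp

lemma eq_smul_of_two_mul_e8Coord_eq {c : O} (hc : c ≠ 0) {y z : Fin 4 → O}
    (h : ∀ i, 2 * ((e8Coord (conj c • y) i : ℚ) / O.norm c) = e8Coord z i) :
    (2 : O) • y = c • z := by
  have hdist := sum_e8Coord_div_sub_sq hc z ((2 : O) • y)
  rw [Finset.sum_eq_zero fun i _ => by
    rw [smul_comm, two_smul, map_add, Pi.add_apply, ← h i]; push_cast; ring, eq_comm,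
    div_eq_zero_iff] at hdist
  simpa [reducedNorm_e8Form_eq_zero, hc, sub_eq_zero] using hdist

lemma two_mul_reducedNorm_lt_norm_or {c : O} (hc : c ≠ 0) {y : Fin 4 → O}
    (hy : ∀ x, reducedNorm e8Form y ≤ reducedNorm e8Form (y - c • x)) :
    2 * reducedNorm e8Form y < O.norm c ∨ 2 * reducedNorm e8Form y = O.norm c ∧
      ∃ z, reducedNorm e8Form z = 2 ∧ (2 : O) • y = c • z := by
  have hm : 0 < O.norm c := O.norm_pos.2 hc
  have hmQ : (0 : ℚ) < O.norm c := by exact_mod_cast hm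
  have hdist := sum_e8Coord_div_sub_sq hc
  have hdist0 := hdist 0 y
  simp only [map_zero, Pi.zero_apply, Int.cast_zero, sub_zero, smul_zero] at hdist0
  have hmem : (fun i => (e8Coord (conj c • y) i : ℚ) / O.norm c) ∈ doubledE8VoronoiCell ℚ := by
    intro w hw
    obtain ⟨x, rfl⟩ := exists_e8Coord_eq hw
    rw [hdist0, hdist]
    have := hy x
    gcongr
  refine (sum_sq_lt_four_or_two_mul_mem_doubledE8 hmem).imp (fun hlt => ?_)
    fun ⟨heq, l, hl, hl2⟩ => ?_
  · rw [hdist0, div_lt_iff₀ hmQ] at hlt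
    have : 2 * (reducedNorm e8Form y : ℚ) < O.norm c := by linarith
    exact_mod_cast this
  · rw [hdist0, div_eq_iff hmQ.ne'] at heq
    have hN : 2 * reducedNorm e8Form y = O.norm c := by
      have : 2 * (reducedNorm e8Form y : ℚ) = O.norm c := by linarith
      exact_mod_cast this
    obtain ⟨z, rfl⟩ := exists_e8Coord_eq hl
    have hz := eq_smul_of_two_mul_e8Coord_eq hc hl2
    refine ⟨hN, z, ?_, hz⟩
    have hnorm := congrArg (reducedNorm e8Form) hz
    rw [reducedNorm_smul, reducedNorm_smul, O.norm_two] at hnorm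
    exact mul_left_cancel₀ hm.ne' (by linarith)

lemma exists_two_mul_reducedNorm_sub_smul_lt_norm_or {c : O} (hc : c ≠ 0) (y : Fin 4 → O) :
    ∃ p, 2 * reducedNorm e8Form (y - c • p) < O.norm c ∨
      2 * reducedNorm e8Form (y - c • p) = O.norm c ∧
        ∃ x, reducedNorm e8Form x = 1 ∧ 2 * e8Form (y - c • p) x = -θ * c := by
  let f (p : Fin 4 → O) : ℕ := (reducedNorm e8Form (y - c • p)).toNat
  obtain ⟨p, -, hp⟩ := exists_minimalFor_of_wellFoundedLT (fun _ => True) f ⟨0, trivial⟩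
  have hmin (x : Fin 4 → O) :
      reducedNorm e8Form (y - c • p) ≤ reducedNorm e8Form (y - c • p - c • x) := by
    have hle : f p ≤ f (p + x) := not_lt.1 fun h => h.not_ge (hp trivial h.le)
    have := reducedNorm_e8Form_nonneg (y - c • p - c • x)
    simp only [f, smul_add, ← sub_sub] at hle
    omega
  refine ⟨p, (two_mul_reducedNorm_lt_norm_or hc hmin).imp_right fun ⟨hN, z, hz, hyz⟩ => ⟨hN, ?_⟩⟩
  obtain ⟨x, hx, hzx⟩ := exists_root_of_reducedNorm_eq_two hz
  refine ⟨x, hx, ?_⟩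
  have hform := congrArg (fun y => e8Form y x) hyz
  simp only [map_smul, LinearMap.smul_apply, smul_eq_mul] at hform
  have hθ : θ ≠ 0 := by simp [← O.norm_pos]
  refine mul_left_cancel₀ hθ ?_
  linear_combination θ * hform + c * hzx + c * θ_mul_θ

lemma exists_e8Form_single_ne_zero {p : Fin 4 → O} (hp : p ≠ 0) :
    ∃ i, e8Form p (Pi.single i 1) ≠ 0 := by
  contrapose! hp
  refine reducedNorm_e8Form_eq_zero.1 ?_
  have hform (v : Fin 4 → O) : e8Form p v = 0 := by
    rw [pi_eq_sum_univ' v, map_sum]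
    exact Finset.sum_eq_zero fun i _ => by rw [map_smulₛₗ, hp, smul_zero]
  rw [reducedNorm, hform, map_zero]

lemma reducedNorm_θ_smul_add_smul {p q : Fin 4 → O} (hp : reducedNorm e8Form p = 1)
    (hq : reducedNorm e8Form q = 1) :
    reducedNorm e8Form (θ • p + e8Form p q • q) = 3 - O.norm (e8Form p q) := by
  have hform : e8Form (θ • p) (e8Form p q • q) = θ * O.norm (e8Form p q) := by
    rw [map_smulₛₗ, map_smul, LinearMap.smul_apply, smul_eq_mul, smul_eq_mul, ← O.mul_conj_self]
    ring
  rw [isSkewHermitian_e8Form.reducedNorm_add, reducedNorm_smul, reducedNorm_smul, hp, hq, hform,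
    O.im_mul, O.im_intCast, O.re_intCast, O.im_θ, O.norm_θ]
  ring

lemma norm_e8Form_single_succ (i : Fin 3) :
    O.norm (e8Form (Pi.single i.succ 1) (Pi.single i.castSucc 1)) = 1 := by
  rw [e8Form, Matrix.toLinearMapₛₗ₂'_single]
  fin_cases i <;> simp

lemma exists_norm_e8Form_single_single_eq_one (i : Fin 4) :
    ∃ j, O.norm (e8Form (Pi.single i 1) (Pi.single j 1)) = 1 := by
  refine ⟨![1, 0, 1, 2] i, ?_⟩
  rw [e8Form, Matrix.toLinearMapₛₗ₂'_single]
  fin_cases i <;> simp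

lemma reducedNorm_e8Form_single (i : Fin 4) : reducedNorm e8Form (Pi.single i 1) = 1 := by
  rw [e8Form, reducedNorm, Matrix.toLinearMapₛₗ₂'_single]
  fin_cases i <;> simp

lemma exists_norm_e8Form_single_eq_one {p : Fin 4 → O} (hp : reducedNorm e8Form p = 1) :
    ∃ i, O.norm (e8Form p (Pi.single i 1)) = 1 := by
  obtain ⟨i, hi⟩ := exists_e8Form_single_ne_zero (p := p) (by rintro rfl; simp [reducedNorm] at hp)
  have hcs := reducedNorm_θ_smul_add_smul hp (reducedNorm_e8Form_single i)
  have hnonneg := reducedNorm_e8Form_nonneg (θ • p + e8Form p (Pi.single i 1) • Pi.single i 1)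
  rw [← O.norm_pos] at hi
  have hle : O.norm (e8Form p (Pi.single i 1)) ≤ 6 := by omega
  obtain h | h | h | h := O.norm_eq_of_le_six hle
  · omega
  · exact ⟨i, h⟩
  · obtain ⟨j, hj⟩ := exists_norm_e8Form_single_single_eq_one i
    refine ⟨j, ?_⟩
    rw [h, sub_self, reducedNorm_e8Form_eq_zero] at hcs
    have hform := congrArg (fun v => e8Form v (Pi.single j 1)) hcs
    simp only [map_add, map_smul, LinearMap.add_apply, LinearMap.smul_apply, smul_eq_mul, map_zero,
      LinearMap.zero_apply, add_eq_zero_iff_eq_neg] at hform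
    have hnorm := congrArg O.norm hform
    rw [O.norm_neg, map_mul, map_mul, O.norm_θ, h, hj] at hnorm
    omega
  · omega

lemma exists_map_single_eq_single (i : Fin 4) :
    ∃ g ∈ isometryGroup e8Form, g (Pi.single i 1) = Pi.single 0 1 := by
  induction i using Fin.induction with
  | zero => exact ⟨1, one_mem _, rfl⟩
  | succ i ih =>
    obtain ⟨g, hg, hgi⟩ := ih
    obtain ⟨h, hh, hhi⟩ := isSkewHermitian_e8Form.exists_map_eq_of_norm_apply_eq_one
      (reducedNorm_e8Form_single _) (reducedNorm_e8Form_single _) (norm_e8Form_single_succ i)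
    exact ⟨g * h, mul_mem hg hh, by rw [LinearEquiv.mul_apply, hhi, hgi]⟩

lemma exists_map_eq_single_of_reducedNorm_eq_one {p : Fin 4 → O}
    (hp : reducedNorm e8Form p = 1) : ∃ g ∈ isometryGroup e8Form, g p = Pi.single 0 1 := by
  obtain ⟨i, hi⟩ := exists_norm_e8Form_single_eq_one hp
  obtain ⟨g, hg, hgp⟩ := isSkewHermitian_e8Form.exists_map_eq_of_norm_apply_eq_one hp
    (reducedNorm_e8Form_single i) hi
  obtain ⟨h, hh, hhi⟩ := exists_map_single_eq_single i
  exact ⟨h * g, mul_mem hh hg, by rw [LinearEquiv.mul_apply, hgp, hhi]⟩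

end RankFour

namespace O

/-- The trace `z + conj z`, as an integer. -/
def trace : O →+ ℤ := 2 • re + im

lemma trace_apply (z : O) : trace z = 2 * re z + im z := by simp [trace]

lemma four_mul_norm (z : O) : 4 * norm z = trace z ^ 2 + 3 * im z ^ 2 := by
  rw [norm_eq, trace_apply]; ring

lemma norm_lt_norm_of_abs_trace_le {a c : O} (ht : |trace (a * conj c)| ≤ norm c)
    (hi : |im (a * conj c)| ≤ norm c)
    (hlt : |trace (a * conj c)| < norm c ∨ |im (a * conj c)| < norm c) : norm a < norm c := by
  have h4 := four_mul_norm (a * conj c)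
  rw [map_mul, norm_conj] at h4
  have ht2 := sq_le_sq' (abs_le.1 ht).1 (abs_le.1 ht).2
  have hi2 := sq_le_sq' (abs_le.1 hi).1 (abs_le.1 hi).2
  refine lt_of_mul_lt_mul_right (a := norm c) ?_ (norm_nonneg c)
  rcases hlt with h | h
  · have := sq_lt_sq' (abs_lt.1 h).1 (abs_lt.1 h).2
    linarith
  · have := sq_lt_sq' (abs_lt.1 h).1 (abs_lt.1 h).2
    linarith

lemma exists_abs_trace_add_mul_le (z : O) {m : ℤ} (hm : 0 < m) :
    ∃ k : ℤ, |trace (z + k * m)| ≤ m := by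
  refine ⟨-((trace z + m) / (2 * m)), ?_⟩
  have hdiv := Int.ediv_mul_add_emod (trace z + m) (2 * m)
  have := Int.emod_nonneg (trace z + m) (b := 2 * m) (by omega)
  have := Int.emod_lt_of_pos (trace z + m) (b := 2 * m) (by omega)
  simp only [trace_apply, map_add, re_mul, im_mul, re_intCast, im_intCast] at *
  rw [abs_le]
  constructor <;> linarith

end O

section Hyperbolic

variable {M : Type*} [AddCommGroup M] [Module O M] {B : M →ₗ[O] M →ₛₗ[conj] O}

lemma mem_orbit_of_mem_isometryGroup {g : M ≃ₗ[O] M} (hg : g ∈ isometryGroup B) (v : M) :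
    g v ∈ MulAction.orbit (isometryGroup B) v := ⟨⟨g, hg⟩, rfl⟩

lemma reducedNorm_of_mem_orbit {v w : M} (h : w ∈ MulAction.orbit (isometryGroup B) v) :
    reducedNorm B w = reducedNorm B v := by
  obtain ⟨g, rfl⟩ := h
  exact reducedNorm_of_mem_isometryGroup g.2 v

lemma im_mul_conj_eq_reducedNorm_sub (v : M × O × O) :
    O.im (v.2.1 * conj v.2.2) =
      reducedNorm B v.1 - reducedNorm (hyperbolicExtension B) v := by
  rw [hyperbolicExtension, reducedNorm_orthogonalSum, reducedNorm_hyperbolicPlane]; ring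

lemma IsSkewHermitian.eichler_add_intCast_mem_isometryGroup (hB : IsSkewHermitian B) (p : M)
    (k : ℤ) : eichler B p (reducedNorm B p * ω + k) ∈ isometryGroup (hyperbolicExtension B) := by
  refine eichler_mem_isometryGroup hB ?_
  rw [hB.apply_self, map_add, map_mul, map_intCast, map_intCast, conj_ω, θ_eq]
  ring

lemma IsSkewHermitian.exists_map_eq_of_apply_eq_one (hB : IsSkewHermitian B) {k x : M}
    (hkx : B k x = 1) (a : O) :
    ∃ g ∈ isometryGroup (hyperbolicExtension B),
      g (k, a, 0) = (k, 0, 0) ∧ g (0, 1, 0) = (0, 1, 0) := by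
  refine ⟨_, hB.eichler_add_intCast_mem_isometryGroup (-conj a • x) 0, ?_, ?_⟩ <;>
    simp [eichler_apply, hkx]

lemma IsSkewHermitian.exists_mem_orbit_abs_trace_le (hB : IsSkewHermitian B) {v : M × O × O}
    (hc : v.2.2 ≠ 0) (p : M) :
    ∃ a, (v.1 - v.2.2 • p, a, v.2.2) ∈
        MulAction.orbit (isometryGroup (hyperbolicExtension B)) v ∧
      |O.trace (a * conj v.2.2)| ≤ O.norm v.2.2 := by
  obtain ⟨k, hk⟩ := O.exists_abs_trace_add_mul_le
    ((v.2.1 + B v.1 p + reducedNorm B p * ω * v.2.2) * conj v.2.2) (O.norm_pos.2 hc)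
  refine ⟨_, mem_orbit_of_mem_isometryGroup (hB.eichler_add_intCast_mem_isometryGroup p k) v, ?_⟩
  convert hk using 3
  linear_combination k * O.mul_conj_self v.2.2

lemma exists_mem_orbit_norm_lt_of_abs_trace_le {v : M × O × O}
    (ht : |O.trace (v.2.1 * conj v.2.2)| ≤ O.norm v.2.2)
    (hi : |O.im (v.2.1 * conj v.2.2)| ≤ O.norm v.2.2)
    (hlt : |O.trace (v.2.1 * conj v.2.2)| < O.norm v.2.2 ∨
      |O.im (v.2.1 * conj v.2.2)| < O.norm v.2.2) :
    ∃ w ∈ MulAction.orbit (isometryGroup (hyperbolicExtension B)) v,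
      O.norm w.2.2 < O.norm v.2.2 :=
  ⟨_, mem_orbit_of_mem_isometryGroup
    (prodCongr_mem_isometryGroup (one_mem _) hyperbolicSwap_mem_isometryGroup) v,
    O.norm_lt_norm_of_abs_trace_le ht hi hlt⟩

lemma IsSkewHermitian.exists_mem_orbit_norm_lt_of_abs_reducedNorm_sub_lt (hB : IsSkewHermitian B)
    {v : M × O × O} (hc : v.2.2 ≠ 0) {p : M}
    (hp : |reducedNorm B (v.1 - v.2.2 • p) -
      reducedNorm (hyperbolicExtension B) v| < O.norm v.2.2) :
    ∃ w ∈ MulAction.orbit (isometryGroup (hyperbolicExtension B)) v,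
      O.norm w.2.2 < O.norm v.2.2 := by
  obtain ⟨a, ha, ht⟩ := hB.exists_mem_orbit_abs_trace_le hc p
  rw [← reducedNorm_of_mem_orbit ha,
    ← im_mul_conj_eq_reducedNorm_sub (v.1 - v.2.2 • p, a, v.2.2)] at hp
  obtain ⟨w, hw, hlt⟩ := exists_mem_orbit_norm_lt_of_abs_trace_le (B := B)
    (v := (v.1 - v.2.2 • p, a, v.2.2)) ht hp.le (.inr hp)
  exact ⟨w, MulAction.orbit_eq_iff.2 ha ▸ hw, hlt⟩

/-- Translating by the root `x` preserves `im (a * conj c)` and changes the trace of `a * conj c` by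
an odd multiple of `norm c`. -/
lemma IsSkewHermitian.exists_mem_orbit_norm_lt_of_root (hB : IsSkewHermitian B)
    {v : M × O × O} (hc : v.2.2 ≠ 0) {x : M} (hx : reducedNorm B x = 1)
    (hvx : 2 * B v.1 x = -θ * v.2.2)
    (ht : |O.trace (v.2.1 * conj v.2.2)| ≤ O.norm v.2.2)
    (hi : O.im (v.2.1 * conj v.2.2) = O.norm v.2.2) :
    ∃ w ∈ MulAction.orbit (isometryGroup (hyperbolicExtension B)) v,
      O.norm w.2.2 < O.norm v.2.2 := by
  have hm := O.norm_pos.2 hc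
  have hi' : |O.im (v.2.1 * conj v.2.2)| ≤ O.norm v.2.2 := by rw [hi, abs_of_pos hm]
  rcases ht.lt_or_eq with hlt | heq
  · exact exists_mem_orbit_norm_lt_of_abs_trace_le ht hi' (.inl hlt)
  obtain ⟨k, hk⟩ : ∃ k : ℤ, O.trace (v.2.1 * conj v.2.2) + (2 * k + 1) * O.norm v.2.2 = 0 :=
    (eq_or_eq_neg_of_abs_eq heq).elim (fun h => ⟨-1, by rw [h]; ring⟩)
      (fun h => ⟨0, by rw [h]; ring⟩)
  set v' := eichler B x (reducedNorm B x * ω + k) v with hv'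
  have horbit := mem_orbit_of_mem_isometryGroup (hB.eichler_add_intCast_mem_isometryGroup x k) v
  have hmul : 2 * (v'.2.1 * conj v'.2.2) =
      2 * (v.2.1 * conj v.2.2) + ((2 * k + 1) * O.norm v.2.2 : ℤ) := by
    simp only [hv', eichler_apply, hx]
    push_cast
    rw [← O.mul_conj_self]
    linear_combination conj v.2.2 * hvx - v.2.2 * conj v.2.2 * θ_eq
  have htrace : O.trace (v'.2.1 * conj v'.2.2) = 0 := by
    have := congrArg O.trace hmul
    simp only [two_mul, map_add, O.trace_apply, O.re_intCast, O.im_intCast] at this hk ⊢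
    linarith
  have him : O.im (v'.2.1 * conj v'.2.2) = O.norm v.2.2 := by
    have := congrArg O.im hmul
    simp only [two_mul, map_add, O.im_intCast] at this
    linarith
  obtain ⟨w, hw, hlt⟩ := exists_mem_orbit_norm_lt_of_abs_trace_le (B := B) (v := v')
    (by rw [htrace, abs_zero]; exact O.norm_nonneg _) (by rw [him, abs_of_pos hm]; rfl)
    (.inl (by rwa [htrace, abs_zero]))
  exact ⟨w, MulAction.orbit_eq_iff.2 horbit ▸ hw, hlt⟩

end Hyperbolic

section RankTen

/-- The form `θ⁻¹ ψ` on `Λ′ ⊥ Λ″`. -/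
abbrev definiteForm : ((Fin 4 → O) × (Fin 4 → O)) →ₗ[O] ((Fin 4 → O) × (Fin 4 → O)) →ₛₗ[conj] O :=
  orthogonalSum e8Form e8Form

/-- The form `θ⁻¹ ψ` on `Λ = Λ′ ⊥ Λ″ ⊥ H_𝒪`. -/
abbrev lorentzianForm := hyperbolicExtension definiteForm

lemma isSkewHermitian_definiteForm : IsSkewHermitian definiteForm :=
  isSkewHermitian_e8Form.orthogonalSum isSkewHermitian_e8Form

lemma isSkewHermitian_lorentzianForm : IsSkewHermitian lorentzianForm :=
  isSkewHermitian_definiteForm.orthogonalSum (isSkewHermitian_hyperbolicPlane conj_conj)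

lemma reducedNorm_definiteForm_nonneg (k : (Fin 4 → O) × (Fin 4 → O)) :
    0 ≤ reducedNorm definiteForm k := by
  rw [reducedNorm_orthogonalSum]
  exact add_nonneg (reducedNorm_e8Form_nonneg _) (reducedNorm_e8Form_nonneg _)

lemma reducedNorm_definiteForm_eq_zero {k : (Fin 4 → O) × (Fin 4 → O)} :
    reducedNorm definiteForm k = 0 ↔ k = 0 := by
  rw [reducedNorm_orthogonalSum, add_eq_zero_iff_of_nonneg (reducedNorm_e8Form_nonneg _)
    (reducedNorm_e8Form_nonneg _), reducedNorm_e8Form_eq_zero, reducedNorm_e8Form_eq_zero,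
    Prod.ext_iff, Prod.fst_zero, Prod.snd_zero]

/-- The root `r₁′`. -/
def firstRoot : (Fin 4 → O) × (Fin 4 → O) := (Pi.single 0 1, 0)

lemma reducedNorm_firstRoot : reducedNorm definiteForm firstRoot = 1 := by
  rw [reducedNorm_orthogonalSum, firstRoot, reducedNorm_e8Form_single,
    reducedNorm_e8Form_eq_zero.2 rfl, add_zero]

lemma exists_map_eq_firstRoot {k : (Fin 4 → O) × (Fin 4 → O)}
    (hk : reducedNorm definiteForm k = 1) : ∃ g ∈ isometryGroup definiteForm, g k = firstRoot := by
  have hsnd {p : Fin 4 → O} (hp : reducedNorm e8Form p = 1) :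
      ∃ g ∈ isometryGroup definiteForm, g (p, 0) = firstRoot := by
    obtain ⟨g, hg, hgp⟩ := exists_map_eq_single_of_reducedNorm_eq_one hp
    exact ⟨_, prodCongr_mem_isometryGroup hg (one_mem _), Prod.ext hgp rfl⟩
  obtain ⟨p, q⟩ := k
  rw [reducedNorm_orthogonalSum] at hk
  dsimp only at hk
  have hp := reducedNorm_e8Form_nonneg p
  have hq := reducedNorm_e8Form_nonneg q
  obtain ⟨hp, hq⟩ | ⟨hp, hq⟩ : reducedNorm e8Form p = 1 ∧ reducedNorm e8Form q = 0 ∨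
      reducedNorm e8Form p = 0 ∧ reducedNorm e8Form q = 1 := by omega
  · rw [reducedNorm_e8Form_eq_zero.1 hq]
    exact hsnd hp
  · rw [reducedNorm_e8Form_eq_zero.1 hp]
    obtain ⟨g, hg, hgq⟩ := hsnd hq
    refine ⟨g * LinearEquiv.prodComm O (Fin 4 → O) (Fin 4 → O),
      mul_mem hg (prodComm_mem_isometryGroup e8Form), ?_⟩
    rw [LinearEquiv.mul_apply]
    exact hgq

lemma exists_reducedNorm_sub_smul_lt_norm_or {c : O} (hc : c ≠ 0)
    (k : (Fin 4 → O) × (Fin 4 → O)) :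
    ∃ p, reducedNorm definiteForm (k - c • p) < O.norm c ∨
      reducedNorm definiteForm (k - c • p) = O.norm c ∧
        ∃ x, reducedNorm definiteForm x = 1 ∧ 2 * definiteForm (k - c • p) x = -θ * c := by
  obtain ⟨p, hp⟩ := exists_two_mul_reducedNorm_sub_smul_lt_norm_or hc k.1
  obtain ⟨q, hq⟩ := exists_two_mul_reducedNorm_sub_smul_lt_norm_or hc k.2
  refine ⟨(p, q), ?_⟩
  have hpq : reducedNorm definiteForm (k - c • (p, q)) =
      reducedNorm e8Form (k.1 - c • p) + reducedNorm e8Form (k.2 - c • q) :=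
    reducedNorm_orthogonalSum _
  rcases hp with hp | ⟨hp, x, hx, hkx⟩
  · exact .inl (by rcases hq with hq | ⟨hq, -⟩ <;> omega)
  · rcases hq with hq | ⟨hq, -⟩
    · exact .inl (by omega)
    · refine .inr ⟨by omega, (x, 0), ?_, ?_⟩
      · rw [reducedNorm_orthogonalSum, hx, reducedNorm_e8Form_eq_zero.2 rfl, add_zero]
      · rw [← hkx, orthogonalSum_apply, map_zero, add_zero]
        rfl

lemma exists_abs_reducedNorm_sub_smul_sub_one_lt_norm {c : O} (hc : c ≠ 0)
    (k : (Fin 4 → O) × (Fin 4 → O)) :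
    ∃ p, |reducedNorm definiteForm (k - c • p) - 1| < O.norm c := by
  have hm := O.norm_pos.2 hc
  rcases (show 1 ≤ O.norm c by omega).eq_or_lt with hm1 | hm1
  · refine ⟨conj c • (k - firstRoot), ?_⟩
    rw [smul_smul, O.mul_conj_self, ← hm1, Int.cast_one, one_smul, sub_sub_cancel,
      reducedNorm_firstRoot, sub_self, abs_zero]
    exact one_pos
  · obtain ⟨p, hp⟩ := exists_reducedNorm_sub_smul_lt_norm_or hc k
    have := reducedNorm_definiteForm_nonneg (k - c • p)
    refine ⟨p, ?_⟩
    rw [abs_lt]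
    rcases hp with hp | ⟨hp, -⟩ <;> constructor <;> omega

lemma exists_mem_orbit_norm_lt {v : ((Fin 4 → O) × (Fin 4 → O)) × O × O} (hc : v.2.2 ≠ 0)
    (hv : reducedNorm lorentzianForm v = 0 ∨ reducedNorm lorentzianForm v = 1) :
    ∃ w ∈ MulAction.orbit (isometryGroup lorentzianForm) v, O.norm w.2.2 < O.norm v.2.2 := by
  have hB := isSkewHermitian_definiteForm
  rcases hv with hv | hv
  · obtain ⟨p, hp⟩ := exists_reducedNorm_sub_smul_lt_norm_or hc v.1
    have hnonneg := reducedNorm_definiteForm_nonneg (v.1 - v.2.2 • p)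
    rcases hp with hlt | ⟨heq, x, hx, hvx⟩
    · exact hB.exists_mem_orbit_norm_lt_of_abs_reducedNorm_sub_lt hc
        (p := p) (by rwa [hv, sub_zero, abs_of_nonneg hnonneg])
    · obtain ⟨a, ha, ht⟩ := hB.exists_mem_orbit_abs_trace_le hc p
      obtain ⟨w, hw, hlt⟩ := hB.exists_mem_orbit_norm_lt_of_root
        (v := (v.1 - v.2.2 • p, a, v.2.2)) hc hx hvx ht (by
          rw [im_mul_conj_eq_reducedNorm_sub (B := definiteForm), reducedNorm_of_mem_orbit ha, hv,
            heq, sub_zero])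
      exact ⟨w, MulAction.orbit_eq_iff.2 ha ▸ hw, hlt⟩
  · obtain ⟨p, hp⟩ := exists_abs_reducedNorm_sub_smul_sub_one_lt_norm hc v.1
    exact hB.exists_mem_orbit_norm_lt_of_abs_reducedNorm_sub_lt hc (p := p) (by rwa [hv])

lemma exists_mem_orbit_snd_eq_zero {v : ((Fin 4 → O) × (Fin 4 → O)) × O × O}
    (hv : reducedNorm lorentzianForm v = 0 ∨ reducedNorm lorentzianForm v = 1) :
    ∃ w ∈ MulAction.orbit (isometryGroup lorentzianForm) v, w.2.2 = 0 := by
  obtain ⟨w, hw, hmin⟩ := exists_minimalFor_of_wellFoundedLT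
    (· ∈ MulAction.orbit (isometryGroup lorentzianForm) v) (fun w => (O.norm w.2.2).toNat)
    ⟨v, MulAction.mem_orbit_self v⟩
  refine ⟨w, hw, ?_⟩
  by_contra hc
  obtain ⟨w', hw', hlt⟩ := exists_mem_orbit_norm_lt hc (by rwa [reducedNorm_of_mem_orbit hw])
  have hle := hmin (MulAction.orbit_eq_iff.2 hw ▸ hw')
  have := O.norm_nonneg w'.2.2
  have := hle (by dsimp only; omega)
  dsimp only at this
  omega

lemma exists_map_eq_of_isPrimitive {n : ((Fin 4 → O) × (Fin 4 → O)) × O × O}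
    (hn : IsPrimitive O n) (hn0 : reducedNorm lorentzianForm n = 0) :
    ∃ g ∈ isometryGroup lorentzianForm, g n = (0, 1, 0) := by
  obtain ⟨_, ⟨⟨g, hg⟩, rfl⟩, hc⟩ := exists_mem_orbit_snd_eq_zero (.inl hn0)
  change (g n).2.2 = 0 at hc
  have hk : (g n).1 = 0 := by
    rw [← reducedNorm_of_mem_isometryGroup hg, reducedNorm_orthogonalSum,
      reducedNorm_hyperbolicPlane, hc, map_zero, mul_zero, map_zero, neg_zero, add_zero] at hn0
    exact reducedNorm_definiteForm_eq_zero.1 hn0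
  obtain ⟨a, ha⟩ : ∃ a : O, g n = a • (0, 1, 0) :=
    ⟨(g n).2.1, Prod.ext (by rw [hk, Prod.smul_fst, smul_zero])
      (Prod.ext (mul_one _).symm (hc.trans (smul_zero _).symm))⟩
  have hnorm : O.norm a = 1 :=
    O.isUnit_iff_norm_eq_one.1 ((isPrimitive_map_iff g).2 hn a ⟨_, ha⟩)
  obtain ⟨f, hf, f_apply⟩ := exists_smul_mem_isometryGroup lorentzianForm
    (u := conj a) (by rwa [O.norm_conj])
  refine ⟨f * g, mul_mem hf hg, ?_⟩
  rw [LinearEquiv.mul_apply, f_apply, ha, smul_smul, mul_comm, O.mul_conj_self, hnorm,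
    Int.cast_one, one_smul]

lemma definiteForm_firstRoot : definiteForm firstRoot (Pi.single 1 1, 0) = 1 := by
  simp [firstRoot, e8Form_apply]

lemma exists_map_eq_firstRoot_of_snd_eq_zero {x : ((Fin 4 → O) × (Fin 4 → O)) × O × O}
    (hx : reducedNorm lorentzianForm x = 1) (hc : x.2.2 = 0) :
    ∃ g ∈ isometryGroup lorentzianForm, g x = (firstRoot, 0, 0) ∧ g (0, 1, 0) = (0, 1, 0) := by
  obtain ⟨k, a, c⟩ := x
  obtain rfl : c = 0 := hc
  have hk : reducedNorm definiteForm k = 1 := by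
    rwa [reducedNorm_orthogonalSum, reducedNorm_hyperbolicPlane, map_zero, mul_zero, map_zero,
      neg_zero, add_zero] at hx
  obtain ⟨f, hf, hfk⟩ := exists_map_eq_firstRoot hk
  obtain ⟨g, hg, hgx, hge⟩ := isSkewHermitian_definiteForm.exists_map_eq_of_apply_eq_one
    definiteForm_firstRoot a
  refine ⟨g * f.prodCongr 1, mul_mem hg (prodCongr_mem_isometryGroup hf (one_mem _)), ?_, ?_⟩
  · rw [← hgx, ← hfk]; rfl
  · nth_rw 2 [← hge]
    rw [LinearEquiv.mul_apply, LinearEquiv.prodCongr_apply, map_zero]; rfl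

lemma exists_map_eq_firstRoot_and_map_eq {x n : ((Fin 4 → O) × (Fin 4 → O)) × O × O}
    (hx : reducedNorm lorentzianForm x = 1) (hn : IsPrimitive O n)
    (hn0 : reducedNorm lorentzianForm n = 0) (hxn : lorentzianForm x n = 0) :
    ∃ g ∈ isometryGroup lorentzianForm, g x = (firstRoot, 0, 0) ∧ g n = (0, 1, 0) := by
  obtain ⟨f, hf, hfn⟩ := exists_map_eq_of_isPrimitive hn hn0
  rw [← hf, hfn, hyperbolicExtension_apply_zero_one_zero, neg_eq_zero] at hxn
  obtain ⟨g, hg, hgx, hge⟩ := exists_map_eq_firstRoot_of_snd_eq_zero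
    (by rwa [reducedNorm_of_mem_isometryGroup hf]) hxn
  exact ⟨g * f, mul_mem hg hf, hgx, by rw [LinearEquiv.mul_apply, hfn, hge]⟩

lemma exists_isPrimitive_apply_eq_zero {x : ((Fin 4 → O) × (Fin 4 → O)) × O × O}
    (hx : reducedNorm lorentzianForm x = 1) :
    ∃ n : ((Fin 4 → O) × (Fin 4 → O)) × O × O,
      IsPrimitive O n ∧ reducedNorm lorentzianForm n = 0 ∧ lorentzianForm x n = 0 := by
  obtain ⟨_, ⟨⟨g, hg⟩, rfl⟩, hc⟩ := exists_mem_orbit_snd_eq_zero (.inr hx)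
  refine ⟨g.symm (0, 1, 0), (isPrimitive_map_iff g.symm).2 isPrimitive_zero_one_zero, ?_, ?_⟩
  · rw [← reducedNorm_of_mem_isometryGroup hg, g.apply_symm_apply]
    simp [reducedNorm]
  · rw [← hg, g.apply_symm_apply, hyperbolicExtension_apply_zero_one_zero, neg_eq_zero]
    exact hc

lemma exists_map_eq_and_map_eq {x n x' n' : ((Fin 4 → O) × (Fin 4 → O)) × O × O}
    (hx : reducedNorm lorentzianForm x = 1) (hn : IsPrimitive O n)
    (hn0 : reducedNorm lorentzianForm n = 0) (hxn : lorentzianForm x n = 0)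
    (hx' : reducedNorm lorentzianForm x' = 1) (hn' : IsPrimitive O n')
    (hn0' : reducedNorm lorentzianForm n' = 0) (hxn' : lorentzianForm x' n' = 0) :
    ∃ g ∈ isometryGroup lorentzianForm, g x = x' ∧ g n = n' := by
  obtain ⟨g, hg, hgx, hgn⟩ := exists_map_eq_firstRoot_and_map_eq hx hn hn0 hxn
  obtain ⟨g', hg', hgx', hgn'⟩ := exists_map_eq_firstRoot_and_map_eq hx' hn' hn0' hxn'
  refine ⟨g'⁻¹ * g, mul_mem (inv_mem hg') hg, ?_, ?_⟩
  · rw [LinearEquiv.mul_apply, hgx, ← hgx']; exact g'.symm_apply_apply x'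
  · rw [LinearEquiv.mul_apply, hgn, ← hgn']; exact g'.symm_apply_apply n'

end RankTen

section Coordinates

/-- The splitting `Λ = Λ′ ⊥ Λ″ ⊥ H_𝒪`. -/
def splitting : (Fin 10 → O) ≃ₗ[O] ((Fin 4 → O) × (Fin 4 → O)) × O × O where
  toFun x := ((![x 0, x 1, x 2, x 3], ![x 4, x 5, x 6, x 7]), x 8, x 9)
  invFun v :=
    ![v.1.1 0, v.1.1 1, v.1.1 2, v.1.1 3, v.1.2 0, v.1.2 1, v.1.2 2, v.1.2 3, v.2.1, v.2.2]
  map_add' x y := by simp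
  map_smul' c x := by simp
  left_inv x := by ext i : 1; fin_cases i <;> rfl
  right_inv v := by ext i : 3 <;> first | rfl | (fin_cases i <;> rfl)

lemma psi10_eq (x y : Fin 10 → O) :
    psi10 x y = θ * lorentzianForm (splitting x) (splitting y) := by
  have h3 : (3 : O) = -θ * θ := by rw [neg_mul, θ_mul_θ, neg_neg]
  simp only [psi10, Fin.sum_univ_succ, gram10]
  simp [lorentzianForm, e8Form_apply, splitting, conj_θ, h3]
  ring

lemma psi10_eq_zero {x y : Fin 10 → O} :
    psi10 x y = 0 ↔ lorentzianForm (splitting x) (splitting y) = 0 := by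
  rw [psi10_eq, mul_eq_zero_iff_left (O.norm_pos.1 (by rw [O.norm_θ]; exact three_pos))]

lemma psi10_self (x : Fin 10 → O) :
    psi10 x x = (3 * reducedNorm lorentzianForm (splitting x) : ℤ) := by
  rw [psi10_eq, isSkewHermitian_lorentzianForm.θ_mul_apply_self, Int.cast_mul, Int.cast_ofNat]

lemma psi10_self_eq_three {x : Fin 10 → O} :
    psi10 x x = 3 ↔ reducedNorm lorentzianForm (splitting x) = 1 := by
  rw [psi10_self]; norm_cast; omega

lemma psi10_self_eq_zero {x : Fin 10 → O} :
    psi10 x x = 0 ↔ reducedNorm lorentzianForm (splitting x) = 0 := by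
  rw [psi10_self]; norm_cast; omega

lemma isPrimVec_iff {x : Fin 10 → O} : IsPrimVec x ↔ IsPrimitive O (splitting x) :=
  (isPrimitive_map_iff splitting).symm

lemma isUnitary10_conj_splitting {g} (hg : g ∈ isometryGroup lorentzianForm) :
    IsUnitary10 (splitting.trans (g.trans splitting.symm)) := fun x y => by
  simp only [psi10_eq, LinearEquiv.trans_apply, LinearEquiv.apply_symm_apply]
  rw [hg]

lemma exists_isPrimVec_psi10_eq_zero {x : Fin 10 → O} (hx : psi10 x x = 3) :
    ∃ n, IsPrimVec n ∧ psi10 n n = 0 ∧ psi10 x n = 0 := by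
  obtain ⟨n, hn, hn0, hxn⟩ := exists_isPrimitive_apply_eq_zero (psi10_self_eq_three.1 hx)
  refine ⟨splitting.symm n, isPrimVec_iff.2 ?_, psi10_self_eq_zero.2 ?_, psi10_eq_zero.2 ?_⟩ <;>
    rwa [splitting.apply_symm_apply]

lemma exists_isUnitary10_map_eq_and_map_eq {x n x' n' : Fin 10 → O}
    (hx : psi10 x x = 3) (hn : IsPrimVec n) (hn0 : psi10 n n = 0) (hxn : psi10 x n = 0)
    (hx' : psi10 x' x' = 3) (hn' : IsPrimVec n') (hn0' : psi10 n' n' = 0)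
    (hxn' : psi10 x' n' = 0) :
    ∃ g : (Fin 10 → O) ≃ₗ[O] (Fin 10 → O), IsUnitary10 g ∧ g x = x' ∧ g n = n' := by
  rw [psi10_self_eq_three] at hx hx'
  rw [psi10_self_eq_zero] at hn0 hn0'
  rw [psi10_eq_zero] at hxn hxn'
  obtain ⟨g, hg, hgx, hgn⟩ := exists_map_eq_and_map_eq hx (isPrimVec_iff.1 hn) hn0 hxn
    hx' (isPrimVec_iff.1 hn') hn0' hxn'
  exact ⟨_, isUnitary10_conj_splitting hg, splitting.symm_apply_eq.2 hgx,
    splitting.symm_apply_eq.2 hgn⟩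

end Coordinates

/-- Every 3-vector of `Λ` is perpendicular to some primitive isotropic
vector, and `U(Λ)` acts transitively on the pairs `(r, n)` of a 3-vector `r` and a
primitive isotropic vector `n` with `ψ(r,n) = 0`.  In particular `U(Λ)` acts
transitively on the 3-vectors of `Λ`. -/
theorem statement7 :
    (∀ x : Fin 10 → O, psi10 x x = 3 →
      ∃ n : Fin 10 → O, IsPrimVec n ∧ psi10 n n = 0 ∧ psi10 x n = 0) ∧
    (∀ x n x' n' : Fin 10 → O,
      psi10 x x = 3 → IsPrimVec n → psi10 n n = 0 → psi10 x n = 0 →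
      psi10 x' x' = 3 → IsPrimVec n' → psi10 n' n' = 0 → psi10 x' n' = 0 →
      ∃ g : (Fin 10 → O) ≃ₗ[O] (Fin 10 → O), IsUnitary10 g ∧ g x = x' ∧ g n = n') ∧
    (∀ x x' : Fin 10 → O, psi10 x x = 3 → psi10 x' x' = 3 →
      ∃ g : (Fin 10 → O) ≃ₗ[O] (Fin 10 → O), IsUnitary10 g ∧ g x = x') := by
  refine ⟨fun x hx => exists_isPrimVec_psi10_eq_zero hx, fun x n x' n' hx hn hn0 hxn hx' hn' hn0' =>
    exists_isUnitary10_map_eq_and_map_eq hx hn hn0 hxn hx' hn' hn0', fun x x' hx hx' => ?_⟩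
  obtain ⟨n, hn, hn0, hxn⟩ := exists_isPrimVec_psi10_eq_zero hx
  obtain ⟨n', hn', hn0', hxn'⟩ := exists_isPrimVec_psi10_eq_zero hx'
  obtain ⟨g, hg, hgx, -⟩ :=
    exists_isUnitary10_map_eq_and_map_eq hx hn hn0 hxn hx' hn' hn0' hxn'
  exact ⟨g, hg, hgx⟩

end
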